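/- arXiv:1112.3800 — 4 statements merged into one kernel-verified Lean document; each statement's English description precedes it below -/
import Mathlib

section
/- Let n be a natural number and let f : ℝⁿ → ℝ be a function of class C^∞ on all of ℝⁿ such that there exist real polynomials p, q in n variables with q ≠ 0 and q(x)·f(x) = p(x) for every x ∈ ℝⁿ. Then f is a regular function: there exist real polynomials p', q' in n variables such that q'(x) ≠ 0 for every x ∈ ℝⁿ and f(x) = p'(x)/q'(x) for every x ∈ ℝⁿ. -/
open MvPolynomial

/-!
The polynomials `a` such that `a * f` is again polynomial form an ideal `I`. If `I` has no real
zero, then the sum of squares of a finite generating set of `I` is a denominator of `f` without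
zeros, so it is enough to find, for each point `c`, an element of `I` not vanishing at `c`.

Let `q * f = p` and let `T` be a Taylor polynomial of `f` at `c` of order `N`. The polynomial
`p - q * T = q * (f - T)` vanishes to order greater than `N` at `c`, so `p ∈ (q) + 𝔪 ^ (N + 1)`,
where `𝔪` is the maximal ideal of `c`. This holds for every `N`, hence Krull's intersection theorem
in the quotient by `(q)` yields `r ∈ 𝔪` with `(1 - r) * p = q * b`. As `q ≠ 0` on a dense set,
`(1 - r) * f = b` by continuity, and `1 - r` takes the value `1` at `c`.
-/

open Asymptotics Filter
open scoped Topology ContDiff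

section IteratedDeriv

variable {𝕜 E F : Type*} [NontriviallyNormedField 𝕜] [NormedAddCommGroup E] [NormedSpace 𝕜 E]
  [NormedAddCommGroup F] [NormedSpace 𝕜 F]

theorem iteratedDeriv_comp_add_smul {f : E → F} {x y : E} {t : 𝕜} {n : ℕ}
    (hf : ContDiffAt 𝕜 n f (x + t • y)) :
    iteratedDeriv n (fun s : 𝕜 ↦ f (x + s • y)) t =
      iteratedFDeriv 𝕜 n f (x + t • y) fun _ ↦ y := by
  induction n generalizing t with
  | zero => simp
  | succ n ih =>
    push_cast at hf
    have hline : Tendsto (fun s : 𝕜 ↦ x + s • y) (𝓝 t) (𝓝 (x + t • y)) :=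
      Continuous.tendsto (by fun_prop) t
    have hnear : iteratedDeriv n (fun s : 𝕜 ↦ f (x + s • y)) =ᶠ[𝓝 t]
        fun s ↦ iteratedFDeriv 𝕜 n f (x + s • y) fun _ ↦ y := by
      filter_upwards [hline.eventually
        ((hf.of_le le_self_add).eventually (by simp))] with s hs using ih hs
    rw [iteratedDeriv_succ, hnear.deriv_eq, hf.deriv_fderiv_add_smul]

end IteratedDeriv

section Taylor

variable {E F : Type*} [NormedAddCommGroup E] [NormedSpace ℝ E]
  [NormedAddCommGroup F] [NormedSpace ℝ F]

theorem taylor_isLittleO_of_contDiffAt {g : ℝ → F} {t₀ : ℝ} {n : ℕ} (hg : ContDiffAt ℝ n g t₀) :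
    (fun t ↦ g t - ∑ k ∈ Finset.range (n + 1),
        ((k.factorial : ℝ)⁻¹ * (t - t₀) ^ k) • iteratedDeriv k g t₀)
      =o[𝓝 t₀] fun t ↦ (t - t₀) ^ n := by
  obtain ⟨ε, hε, hgε⟩ := Metric.eventually_nhds_iff_ball.1 (hg.eventually (by simp))
  have ht₀ : t₀ ∈ Metric.ball t₀ ε := Metric.mem_ball_self hε
  have htaylor := taylor_isLittleO (convex_ball t₀ ε) ht₀
    fun t ht ↦ (hgε t ht).contDiffWithinAt
  rw [Metric.isOpen_ball.nhdsWithin_eq ht₀] at htaylor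
  refine htaylor.congr_left fun t ↦ ?_
  simp only [taylor_within_apply, iteratedDerivWithin_of_isOpen Metric.isOpen_ball ht₀]

theorem taylor_isLittleO_comp_add_smul {f : E → F} {c : E} {n : ℕ}
    (hf : ContDiffAt ℝ n f c) (v : E) :
    (fun t : ℝ ↦ f (c + t • v) - ∑ k ∈ Finset.range (n + 1),
        ((k.factorial : ℝ)⁻¹ * t ^ k) • iteratedFDeriv ℝ k f c fun _ ↦ v)
      =o[𝓝 0] fun t ↦ t ^ n := by
  have hf₀ : ContDiffAt ℝ n f (c + (0 : ℝ) • v) := by simpa using hf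
  have hline : ContDiffAt ℝ n (fun t : ℝ ↦ f (c + t • v)) 0 :=
    hf₀.comp (0 : ℝ) (f := fun t : ℝ ↦ c + t • v) (by fun_prop)
  refine (taylor_isLittleO_of_contDiffAt hline).congr (fun t ↦ ?_) fun t ↦ by rw [sub_zero]
  congr 1
  refine Finset.sum_congr rfl fun k hk ↦ ?_
  have hkn : (k : ℕ∞ω) ≤ n := by exact_mod_cast Nat.lt_succ_iff.1 (Finset.mem_range.1 hk)
  rw [iteratedDeriv_comp_add_smul (hf₀.of_le hkn), zero_smul, add_zero, sub_zero]

end Taylor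

section Homogeneous

variable {σ R : Type*} [CommSemiring R]

theorem eval_smul_of_isHomogeneous {φ : MvPolynomial σ R} {n : ℕ}
    (hφ : φ.IsHomogeneous n) (t : R) (v : σ → R) : eval (t • v) φ = t ^ n * eval v φ := by
  rw [eval_eq, eval_eq, Finset.mul_sum]
  refine Finset.sum_congr rfl fun d hd ↦ ?_
  simp only [Pi.smul_apply, smul_eq_mul, mul_pow, Finset.prod_mul_distrib,
    Finset.prod_pow_eq_pow_sum, ← hφ.degree_eq_sum_deg_support hd]
  ring

theorem exists_polynomial_eval_eq_eval_smul (P : MvPolynomial σ R) (v : σ → R) :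
    ∃ p : Polynomial R, (∀ t, p.eval t = eval (t • v) P) ∧
      ∀ j, p.coeff j = eval v (homogeneousComponent j P) := by
  refine ⟨∑ i ∈ Finset.range (P.totalDegree + 1),
    Polynomial.monomial i (eval v (homogeneousComponent i P)), fun t ↦ ?_, fun j ↦ ?_⟩
  · conv_rhs => rw [← sum_homogeneousComponent P]
    simp only [Polynomial.eval_finsetSum, Polynomial.eval_monomial, map_sum,
      eval_smul_of_isHomogeneous (homogeneousComponent_isHomogeneous _ P), mul_comm]
  · simp only [Polynomial.finsetSum_coeff, Polynomial.coeff_monomial, Finset.sum_ite_eq',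
      Finset.mem_range, Order.lt_add_one_iff]
    split_ifs with hj
    · rfl
    · rw [homogeneousComponent_eq_zero j P (not_le.1 hj), map_zero]

end Homogeneous

section Translation

variable {σ : Type*}

/-- The substitution `P(X) ↦ P(X + c)`, which moves the point `c` to the origin. -/
noncomputable def translateVars {R : Type*} [CommSemiring R] (c : σ → R) :
    MvPolynomial σ R →ₐ[R] MvPolynomial σ R :=
  aeval fun i ↦ X i + C (c i)

theorem eval_translateVars {R : Type*} [CommSemiring R] (x c : σ → R) (P : MvPolynomial σ R) :
    eval x (translateVars c P) = eval (x + c) P := by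
  have hcomp : (aeval x).comp (translateVars c) = aeval (R := R) (x + c) :=
    MvPolynomial.algHom_ext fun i ↦ by simp [translateVars]
  simpa [aeval_eq_eval] using DFunLike.congr_fun hcomp P

variable {R : Type*} [CommRing R]

theorem translateVars_neg_translateVars (c : σ → R) (P : MvPolynomial σ R) :
    translateVars (-c) (translateVars c P) = P := by
  have hcomp : (translateVars (-c)).comp (translateVars c) = AlgHom.id R _ :=
    MvPolynomial.algHom_ext fun i ↦ by simp [translateVars]
  exact DFunLike.congr_fun hcomp P

theorem map_translateVars_neg_idealOfVars_le_ker_eval (c : σ → R) :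
    (idealOfVars σ R).map (translateVars (-c)) ≤ RingHom.ker (eval c) := by
  rw [idealOfVars, Ideal.map_span, Ideal.span_le]
  rintro _ ⟨_, ⟨i, rfl⟩, rfl⟩
  simp [RingHom.mem_ker, eval_translateVars]

end Translation

section VanishingOrder

variable {𝕜 : Type*} [NontriviallyNormedField 𝕜]

theorem X_pow_dvd_of_isLittleO_pow {P : Polynomial 𝕜} {N : ℕ}
    (hP : (fun t ↦ P.eval t) =o[𝓝[≠] 0] fun t ↦ t ^ N) :
    Polynomial.X ^ (N + 1) ∣ P := by
  rcases eq_or_ne P 0 with rfl | hP₀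
  · exact dvd_zero _
  obtain ⟨Q, hPQ, hQ⟩ := P.exists_eq_pow_rootMultiplicity_mul_and_not_dvd hP₀ 0
  set k := P.rootMultiplicity 0
  rw [Polynomial.C_0, sub_zero] at hPQ hQ
  suffices N < k from hPQ ▸ (pow_dvd_pow _ this).mul_right Q
  by_contra! hkN
  have hQlim : Tendsto (fun t ↦ Q.eval t) (𝓝[≠] 0) (𝓝 0) := by
    have hmul := hP.tendsto_div_nhds_zero.mul
      ((continuous_pow (M := 𝕜) (N - k)).continuousWithinAt (s := {0}ᶜ) (x := 0)).tendsto
    rw [zero_mul] at hmul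
    refine hmul.congr' ?_
    filter_upwards [self_mem_nhdsWithin] with t ht
    have ht₀ : t ≠ 0 := ht
    rw [hPQ, Polynomial.eval_mul, Polynomial.eval_pow, Polynomial.eval_X, div_mul_eq_mul_div,
      div_eq_iff (pow_ne_zero _ ht₀), mul_right_comm, pow_mul_pow_sub t hkN, mul_comm]
  have hQ₀ : Q.eval 0 = 0 :=
    tendsto_nhds_unique (Q.continuous.continuousWithinAt) hQlim
  exact hQ (Polynomial.X_dvd_iff.2 (by rwa [Polynomial.coeff_zero_eq_eval_zero]))

variable {σ : Type*}

theorem mem_idealOfVars_pow_of_isLittleO {P : MvPolynomial σ 𝕜} {N : ℕ}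
    (hP : ∀ v : σ → 𝕜, (fun t : 𝕜 ↦ eval (t • v) P) =o[𝓝[≠] 0] fun t ↦ t ^ N) :
    P ∈ idealOfVars σ 𝕜 ^ (N + 1) := by
  rw [mem_pow_idealOfVars_iff']
  intro d hd
  suffices homogeneousComponent d.degree P = 0 by
    simpa [coeff_homogeneousComponent] using congrArg (coeff d) this
  refine MvPolynomial.funext fun v ↦ ?_
  obtain ⟨p, hp_eval, hp_coeff⟩ := exists_polynomial_eval_eq_eval_smul P v
  have hdvd := X_pow_dvd_of_isLittleO_pow ((hP v).congr_left fun t ↦ (hp_eval t).symm)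
  rw [← hp_coeff, map_zero, Polynomial.X_pow_dvd_iff.1 hdvd _ hd]

theorem mem_ker_eval_pow_of_isLittleO {P : MvPolynomial σ 𝕜} {c : σ → 𝕜} {N : ℕ}
    (hP : ∀ v : σ → 𝕜, (fun t : 𝕜 ↦ eval (c + t • v) P) =o[𝓝[≠] 0] fun t ↦ t ^ N) :
    P ∈ RingHom.ker (eval c) ^ (N + 1) := by
  have htranslate : translateVars c P ∈ idealOfVars σ 𝕜 ^ (N + 1) :=
    mem_idealOfVars_pow_of_isLittleO fun v ↦ by simpa only [eval_translateVars, add_comm] using hP v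
  have hmap := Ideal.mem_map_of_mem (translateVars (-c)) htranslate
  rw [translateVars_neg_translateVars, Ideal.map_pow] at hmap
  exact Ideal.pow_right_mono (map_translateVars_neg_idealOfVars_le_ker_eval c) _ hmap

end VanishingOrder

section TaylorPolynomial

theorem exists_eval_eq_multilinearMap_const {σ ι R : Type*} [Finite σ] [Finite ι]
    [CommSemiring R] (M : MultilinearMap R (fun _ : ι ↦ σ → R) R) :
    ∃ T : MvPolynomial σ R, ∀ v, eval v T = M fun _ ↦ v := by
  classical
  cases nonempty_fintype σ
  cases nonempty_fintype ι
  refine ⟨∑ r : ι → σ, C (M fun i ↦ Pi.single (r i) 1) * ∏ i, X (r i), fun v ↦ ?_⟩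
  conv_rhs => rw [pi_eq_sum_univ' v]
  simp only [M.map_sum, M.map_smul_univ, map_sum, map_mul, map_prod, eval_C, eval_X, smul_eq_mul,
    mul_comm]

theorem exists_taylor_mvPolynomial {σ : Type*} [Fintype σ] {f : (σ → ℝ) → ℝ} {c : σ → ℝ} {N : ℕ}
    (hf : ContDiffAt ℝ N f c) :
    ∃ T : MvPolynomial σ ℝ, ∀ v : σ → ℝ,
      (fun t : ℝ ↦ f (c + t • v) - eval (c + t • v) T) =o[𝓝 0] fun t ↦ t ^ N := by
  choose D hD using fun k ↦
    exists_eval_eq_multilinearMap_const (iteratedFDeriv ℝ k f c).toMultilinearMap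
  refine ⟨translateVars (-c) (∑ k ∈ Finset.range (N + 1), C (k.factorial : ℝ)⁻¹ * D k), fun v ↦ ?_⟩
  refine (taylor_isLittleO_comp_add_smul hf v).congr_left fun t ↦ ?_
  have hsmul (k : ℕ) : eval (t • v) (D k) = t ^ k * iteratedFDeriv ℝ k f c fun _ ↦ v := by
    simpa [hD] using (iteratedFDeriv ℝ k f c).map_smul_univ (fun _ ↦ t) fun _ ↦ v
  simp only [eval_translateVars, add_neg_cancel_comm, map_sum, map_mul, eval_C, hsmul, smul_eq_mul,
    mul_assoc]

end TaylorPolynomial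

theorem exists_one_sub_mul_mem_of_forall_mem_sup_pow {R : Type*} [CommRing R] [IsNoetherianRing R]
    {I J : Ideal R} {x : R} (hx : ∀ N : ℕ, x ∈ J ⊔ I ^ N) : ∃ r ∈ I, (1 - r) * x ∈ J := by
  have hmem : Ideal.Quotient.mk J x ∈ (⨅ N : ℕ, I ^ N • ⊤ : Submodule R (R ⧸ J)) := by
    refine (Submodule.mem_iInf _).2 fun N ↦ ?_
    obtain ⟨j, hj, i, hi, rfl⟩ := Submodule.mem_sup.1 (hx N)
    have hsmul : Ideal.Quotient.mk J (j + i) = i • (1 : R ⧸ J) := by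
      rw [map_add, Ideal.Quotient.eq_zero_iff_mem.2 hj, zero_add, Algebra.smul_def, mul_one]
      rfl
    exact hsmul ▸ Submodule.smul_mem_smul hi trivial
  obtain ⟨⟨r, hr⟩, hrx⟩ := (I.mem_iInf_smul_pow_eq_bot_iff _).1 hmem
  refine ⟨r, hr, Ideal.Quotient.eq_zero_iff_mem.1 ?_⟩
  rw [sub_mul, one_mul, map_sub, sub_eq_zero, ← hrx]
  rfl

theorem exists_mem_eval_eq_zero_imp_le_ker_eval {σ R : Type*} [CommRing R] [LinearOrder R]
    [IsStrictOrderedRing R] {I : Ideal (MvPolynomial σ R)} (hI : I.FG) :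
    ∃ a ∈ I, ∀ x, eval x a = 0 → I ≤ RingHom.ker (eval x) := by
  obtain ⟨S, rfl⟩ := hI
  refine ⟨∑ s ∈ S, s * s, Ideal.sum_mem _ fun s hs ↦
    Ideal.mul_mem_left _ s (Ideal.subset_span hs), fun x hx ↦ Ideal.span_le.2 fun s hs ↦ ?_⟩
  simp only [map_sum, map_mul] at hx
  rw [Finset.sum_eq_zero_iff_of_nonneg fun s _ ↦ mul_self_nonneg _] at hx
  exact mul_self_eq_zero.1 (hx s hs)

theorem dense_setOf_eval_ne_zero {σ 𝕜 : Type*} [Finite σ] [NontriviallyNormedField 𝕜]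
    {q : MvPolynomial σ 𝕜} (hq : q ≠ 0) : Dense {x | eval x q ≠ 0} := by
  rw [dense_iff_inter_open]
  rintro U hU ⟨x, hx⟩
  obtain ⟨u, hu, huU⟩ := isOpen_pi_iff'.1 hU x hx
  by_contra! hempty
  refine hq (MvPolynomial.funext_set u
    (fun i ↦ infinite_of_mem_nhds (x i) ((hu i).1.mem_nhds (hu i).2)) fun y hy ↦ ?_)
  by_contra hqy
  exact hempty.subset ⟨huU hy, by simpa using hqy⟩

section DenominatorIdeal

/-- The ideal of denominators of `f` on `U`: the polynomials `a`, zero included, for which `a * f`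
coincides on `U` with a polynomial. -/
def denominatorIdeal {σ R : Type*} [CommSemiring R] (f : (σ → R) → R) (U : Set (σ → R)) :
    Ideal (MvPolynomial σ R) where
  carrier := {a | ∃ b : MvPolynomial σ R, ∀ x ∈ U, eval x a * f x = eval x b}
  add_mem' := by
    rintro a a' ⟨b, hb⟩ ⟨b', hb'⟩
    exact ⟨b + b', fun x hx ↦ by rw [map_add, map_add, add_mul, hb x hx, hb' x hx]⟩
  zero_mem' := ⟨0, fun x _ ↦ by rw [map_zero, zero_mul]⟩
  smul_mem' := by
    rintro r a ⟨b, hb⟩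
    exact ⟨r * b, fun x hx ↦ by rw [smul_eq_mul, map_mul, map_mul, mul_assoc, hb x hx]⟩

theorem mem_denominatorIdeal_of_mul_mem_span {σ 𝕜 : Type*} [Finite σ]
    [NontriviallyNormedField 𝕜] {f : (σ → 𝕜) → 𝕜} {U : Set (σ → 𝕜)} {p q a : MvPolynomial σ 𝕜}
    (hU : IsOpen U) (hf : ContinuousOn f U) (hq : q ≠ 0) (hpq : ∀ x ∈ U, eval x q * f x = eval x p)
    (ha : a * p ∈ Ideal.span {q}) : a ∈ denominatorIdeal f U := by
  obtain ⟨b, hb⟩ := Ideal.mem_span_singleton.1 ha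
  have hclosure := (dense_setOf_eval_ne_zero hq).open_subset_closure_inter hU
  have heqOn : Set.EqOn (fun x ↦ eval x a * f x) (eval · b) (U ∩ {x | eval x q ≠ 0}) := by
    rintro x ⟨hxU, hqx⟩
    refine mul_left_cancel₀ hqx ?_
    calc eval x q * (eval x a * f x) = eval x (a * p) := by rw [map_mul, ← hpq x hxU]; ring
      _ = eval x q * eval x b := by rw [hb, map_mul]
  exact ⟨b, heqOn.of_subset_closure ((MvPolynomial.continuous_eval a).continuousOn.mul hf)
    (MvPolynomial.continuous_eval b).continuousOn Set.inter_subset_left hclosure⟩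

variable {σ : Type*} [Fintype σ] {f : (σ → ℝ) → ℝ} {U : Set (σ → ℝ)}

theorem mem_span_sup_ker_eval_pow_of_contDiffAt {p q : MvPolynomial σ ℝ} {c : σ → ℝ} {N : ℕ}
    (hf : ContDiffAt ℝ N f c) (hpq : ∀ᶠ x in 𝓝 c, eval x q * f x = eval x p) :
    p ∈ Ideal.span {q} ⊔ RingHom.ker (eval c) ^ (N + 1) := by
  obtain ⟨T, hT⟩ := exists_taylor_mvPolynomial hf
  have hrem : p - q * T ∈ RingHom.ker (eval c) ^ (N + 1) := by
    refine mem_ker_eval_pow_of_isLittleO fun v ↦ IsLittleO.mono ?_ nhdsWithin_le_nhds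
    have hline : Tendsto (fun t : ℝ ↦ c + t • v) (𝓝 0) (𝓝 c) := by
      simpa using Continuous.tendsto (f := fun t : ℝ ↦ c + t • v) (by fun_prop) 0
    have hbdd : (fun t : ℝ ↦ eval (c + t • v) q) =O[𝓝 0] fun _ ↦ (1 : ℝ) :=
      (((MvPolynomial.continuous_eval q).tendsto c).comp hline).isBigO_one ℝ
    refine (hbdd.mul_isLittleO (hT v)).congr' ?_ (.of_eq (by simp))
    filter_upwards [hline.eventually hpq] with t ht
    rw [mul_sub, ht, map_sub, map_mul]
  refine Submodule.mem_sup.2 ⟨q * T, ?_, p - q * T, hrem, add_sub_cancel _ _⟩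
  exact Ideal.mul_mem_right T _ (Ideal.mem_span_singleton_self q)

theorem exists_mem_denominatorIdeal_eval_ne_zero {p q : MvPolynomial σ ℝ} {c : σ → ℝ}
    (hU : IsOpen U) (hf : ContDiffOn ℝ ∞ f U) (hq : q ≠ 0)
    (hpq : ∀ x ∈ U, eval x q * f x = eval x p) (hc : c ∈ U) :
    ∃ a ∈ denominatorIdeal f U, eval c a ≠ 0 := by
  have hUc : U ∈ 𝓝 c := hU.mem_nhds hc
  have hmem (N : ℕ) : p ∈ Ideal.span {q} ⊔ RingHom.ker (eval c) ^ N := by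
    have hfN : ContDiffAt ℝ N f c := (hf.contDiffAt hUc).of_le (by exact_mod_cast le_top)
    have hle : Ideal.span {q} ⊔ RingHom.ker (eval c) ^ (N + 1) ≤
        Ideal.span {q} ⊔ RingHom.ker (eval c) ^ N :=
      sup_le_sup_left (Ideal.pow_le_pow_right N.le_succ) _
    exact hle (mem_span_sup_ker_eval_pow_of_contDiffAt hfN (eventually_of_mem hUc hpq))
  obtain ⟨r, hr, hrp⟩ := exists_one_sub_mul_mem_of_forall_mem_sup_pow hmem
  refine ⟨1 - r, mem_denominatorIdeal_of_mul_mem_span hU hf.continuousOn hq hpq hrp, ?_⟩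
  rw [map_sub, map_one, RingHom.mem_ker.1 hr, sub_zero]
  exact one_ne_zero

theorem infinitely_regulous_is_regular_general (hU : IsOpen U) (hf : ContDiffOn ℝ ∞ f U)
    (hrat : ∃ p q : MvPolynomial σ ℝ, q ≠ 0 ∧ ∀ x ∈ U, eval x q * f x = eval x p) :
    ∃ p' q' : MvPolynomial σ ℝ,
      (∀ x ∈ U, eval x q' ≠ 0) ∧ ∀ x ∈ U, f x = eval x p' / eval x q' := by
  obtain ⟨p, q, hq, hpq⟩ := hrat
  obtain ⟨q', ⟨p', hp'⟩, hker⟩ :=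
    exists_mem_eval_eq_zero_imp_le_ker_eval (IsNoetherian.noetherian (denominatorIdeal f U))
  have hq' (x) (hx : x ∈ U) : eval x q' ≠ 0 := fun hzero ↦ by
    obtain ⟨a, ha, hax⟩ := exists_mem_denominatorIdeal_eval_ne_zero hU hf hq hpq hx
    exact hax (hker x hzero ha)
  exact ⟨p', q', hq', fun x hx ↦ eq_div_of_mul_eq (hq' x hx) (by rw [mul_comm, hp' x hx])⟩

end DenominatorIdeal

/-- **Regulous functions, Théorème `thinfregestreg`**: an `∞`-regulous function on `ℝⁿ`
(a `C^∞` function agreeing with a rational function `p/q` wherever `q ≠ 0`) is regular,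
i.e. can be written globally as `p'/q'` with `q'` vanishing nowhere on `ℝⁿ`. -/
theorem infinitely_regulous_is_regular (n : ℕ) (f : (Fin n → ℝ) → ℝ)
    (hf : ContDiff ℝ (⊤ : ℕ∞) f)
    (hrat : ∃ p q : MvPolynomial (Fin n) ℝ, q ≠ 0 ∧
      ∀ x : Fin n → ℝ, eval x q * f x = eval x p) :
    ∃ p' q' : MvPolynomial (Fin n) ℝ,
      (∀ x : Fin n → ℝ, eval x q' ≠ 0) ∧
      (∀ x : Fin n → ℝ, f x = eval x p' / eval x q') := by
  simpa using infinitely_regulous_is_regular_general isOpen_univ hf.contDiffOn (by simpa using hrat)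
end

section
/- Let n, k be natural numbers and let f : ℝⁿ → ℝ be a k-regulous function. Then there exists a finite partition ℝⁿ = S₁ ⊔ … ⊔ S_m into pairwise disjoint Zariski locally closed subsets such that the restriction of f to each S_i is regular: for each i there exist real polynomials p_i, q_i in n variables with q_i(x) ≠ 0 and f(x) = p_i(x)/q_i(x) for every x ∈ S_i. -/
open MvPolynomial

/-- A function `f : ℝⁿ → ℝ` is `k`-regulous if it is of class `C^k` on all of `ℝⁿ` and
agrees with a rational function: there are polynomials `p`, `q` with `q ≠ 0` and
`q(x) * f(x) = p(x)` for every `x`. -/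
def IsRegulous (n k : ℕ) (f : (Fin n → ℝ) → ℝ) : Prop :=
  ContDiff ℝ k f ∧ ∃ p q : MvPolynomial (Fin n) ℝ, q ≠ 0 ∧
    ∀ x : Fin n → ℝ, eval x q * f x = eval x p

/-!
Let `q f = p`, let `d` be the degree of `q`, and expand `q(x + t v) = ∑ cⱼ(x) tʲ`. The top
coefficient `c_d` is the constant `q_d(v)`, where `q_d` is the leading form of `q`, so a single
direction `v` with `q_d(v) ≠ 0` serves all base points `x`: along the line through `x` in
direction `v` the polynomial `q` vanishes to some order `m ≤ d`. Since `f` is continuous along this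
line, `p` vanishes to order at least `m` as well, and dividing by `tᵐ` and letting `t → 0` gives
`f(x)` as the quotient of the `m`-th coefficients of `p(x + t v)` and `q(x + t v)`. The strata are
the sets of those `x` for which this order is `m`.
-/

open Topology

section DirectionalExpansion

variable {σ R : Type*} [CommSemiring R]

theorem coeff_prod_sum_of_natDegree_le {ι : Type*} {s : Finset ι} {P : ι → Polynomial R}
    {n : ι → ℕ} (hP : ∀ i ∈ s, (P i).natDegree ≤ n i) :
    (∏ i ∈ s, P i).coeff (∑ i ∈ s, n i) = ∏ i ∈ s, (P i).coeff (n i) := by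
  classical
  induction s using Finset.induction_on with
  | empty => simp
  | insert i s hi ih =>
    have hs : ∀ j ∈ s, (P j).natDegree ≤ n j := fun j hj => hP j (Finset.mem_insert_of_mem hj)
    rw [Finset.prod_insert hi, Finset.sum_insert hi, Finset.prod_insert hi, ← ih hs]
    exact Polynomial.coeff_mul_add_eq_of_natDegree_le (hP i (Finset.mem_insert_self i s))
      ((Polynomial.natDegree_prod_le s P).trans (Finset.sum_le_sum hs))

theorem homogeneousComponent_totalDegree_ne_zero {q : MvPolynomial σ R} (hq : q ≠ 0) :
    homogeneousComponent q.totalDegree q ≠ 0 := by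
  obtain ⟨e, he, hdeg⟩ : ∃ e ∈ q.support, q.totalDegree = e.degree :=
    Finset.exists_mem_eq_sup _ (support_nonempty.2 hq) _
  refine ne_zero_iff.2 ⟨e, ?_⟩
  rw [coeff_homogeneousComponent, if_pos hdeg.symm]
  exact mem_support_iff.1 he

theorem coeff_aeval_of_natDegree_le_one {ℓ : σ → Polynomial R} (hℓ : ∀ i, (ℓ i).natDegree ≤ 1)
    {q : MvPolynomial σ R} {d : ℕ} (hq : q.totalDegree ≤ d) :
    (aeval ℓ q).coeff d = eval (fun i => (ℓ i).coeff 1) (homogeneousComponent d q) := by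
  rw [aeval_def, eval₂_eq, Polynomial.finsetSum_coeff, homogeneousComponent_apply, map_sum,
    Finset.sum_filter]
  refine Finset.sum_congr rfl fun e he => ?_
  rw [← Polynomial.C_eq_algebraMap, Polynomial.coeff_C_mul]
  have hpow (i : σ) : (ℓ i ^ e i).natDegree ≤ e i := by
    simpa using Polynomial.natDegree_pow_le_of_le (e i) (hℓ i)
  split_ifs with hd
  · rw [← hd, Finsupp.degree_apply, coeff_prod_sum_of_natDegree_le fun i _ => hpow i, eval_monomial,
      Finsupp.prod]
    congr! 2 with i
    simpa using Polynomial.coeff_pow_of_natDegree_le (m := e i) (hℓ i)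
  · have hlt : e.degree < d := lt_of_le_of_ne ((le_totalDegree he).trans hq) hd
    have hprod : (∏ i ∈ e.support, ℓ i ^ e i).natDegree ≤ e.degree :=
      (Polynomial.natDegree_prod_le _ _).trans (Finset.sum_le_sum fun i _ => hpow i)
    rw [Polynomial.coeff_eq_zero_of_natDegree_lt (hprod.trans_lt hlt), mul_zero]

/-- The expansion of `q(X + T v)` as a polynomial in `T`, whose coefficients are
polynomials in the base point `X`. Specializing `X` to `x` restricts `q` to the line through `x`
in direction `v`. -/
noncomputable def directionalExpansion (v : σ → R) :
    MvPolynomial σ R →ₐ[R] Polynomial (MvPolynomial σ R) :=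
  aeval fun i => Polynomial.C (C (v i)) * Polynomial.X + Polynomial.C (X i)

theorem map_eval_directionalExpansion (v x : σ → R) (q : MvPolynomial σ R) :
    (directionalExpansion v q).map (eval x) =
      aeval (fun i => Polynomial.C (v i) * Polynomial.X + Polynomial.C (x i)) q := by
  induction q using MvPolynomial.induction_on with
  | C a => simp [directionalExpansion, Polynomial.algebraMap_apply, algebraMap_eq]
  | add p q hp hq => simp only [map_add, Polynomial.map_add, hp, hq]
  | mul_X p i hp =>
    rw [map_mul, Polynomial.map_mul, map_mul, hp]
    simp [directionalExpansion]

theorem eval_map_eval_directionalExpansion (v x : σ → R) (q : MvPolynomial σ R) (t : R) :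
    ((directionalExpansion v q).map (eval x)).eval t = eval (x + t • v) q := by
  rw [map_eval_directionalExpansion]
  induction q using MvPolynomial.induction_on with
  | C a => simp
  | add p q hp hq => simp [hp, hq]
  | mul_X p i hp =>
    rw [map_mul, Polynomial.eval_mul, map_mul, hp]
    simp [mul_comm t, add_comm]

theorem eval_coeff_directionalExpansion {q : MvPolynomial σ R} {d : ℕ} (hq : q.totalDegree ≤ d)
    (v x : σ → R) :
    eval x ((directionalExpansion v q).coeff d) = eval v (homogeneousComponent d q) := by
  rw [← Polynomial.coeff_map, map_eval_directionalExpansion,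
    coeff_aeval_of_natDegree_le_one (fun _ => Polynomial.natDegree_linear_le) hq]
  simp

end DirectionalExpansion

theorem exists_forall_eval_coeff_directionalExpansion_ne_zero {σ R : Type*} [CommRing R]
    [IsDomain R] [Infinite R] {q : MvPolynomial σ R} (hq : q ≠ 0) :
    ∃ v : σ → R, ∀ x, eval x ((directionalExpansion v q).coeff q.totalDegree) ≠ 0 := by
  have hlead := homogeneousComponent_totalDegree_ne_zero hq
  obtain ⟨v, hv⟩ : ∃ v, eval v (homogeneousComponent q.totalDegree q) ≠ 0 := by
    by_contra! h
    exact hlead (MvPolynomial.funext fun v => by rw [h v, map_zero])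
  exact ⟨v, fun x => by rwa [eval_coeff_directionalExpansion le_rfl]⟩

theorem coeff_mul_eq_coeff_of_X_pow_dvd {R : Type*} [CommRing R] [IsDomain R]
    [TopologicalSpace R] [IsTopologicalSemiring R] [T2Space R] [(𝓝[≠] (0 : R)).NeBot]
    {g : R → R} (hg : ContinuousAt g 0) {m : ℕ} {P Q : Polynomial R}
    (hPQ : ∀ t, Q.eval t * g t = P.eval t) (hQ : Polynomial.X ^ m ∣ Q) :
    Q.coeff m * g 0 = P.coeff m := by
  induction m generalizing P Q with
  | zero => simpa [Polynomial.coeff_zero_eq_eval_zero] using hPQ 0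
  | succ m ih =>
    obtain ⟨Q, rfl⟩ := (dvd_pow_self _ m.succ_ne_zero).trans hQ
    obtain ⟨P, rfl⟩ : Polynomial.X ∣ P := by
      simpa [Polynomial.X_dvd_iff, Polynomial.coeff_zero_eq_eval_zero] using (hPQ 0).symm
    have hne : ∀ t ≠ 0, Q.eval t * g t = P.eval t := fun t ht =>
      mul_left_cancel₀ ht <| by simpa [mul_assoc] using hPQ t
    have hnhds : (fun t => Q.eval t * g t) =ᶠ[𝓝 0] fun t => P.eval t :=
      ((Q.continuousAt.mul hg).eventuallyEq_nhds_iff_eventuallyEq_nhdsNE P.continuousAt).1 <|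
        eventually_nhdsWithin_of_forall hne
    rw [Polynomial.coeff_X_mul, Polynomial.coeff_X_mul]
    refine ih (fun t => ?_) ?_
    · obtain rfl | ht := eq_or_ne t 0
      exacts [hnhds.eq_of_nhds, hne t ht]
    · rwa [pow_succ', mul_dvd_mul_iff_left Polynomial.X_ne_zero] at hQ

theorem eval_coeff_directionalExpansion_mul {σ R : Type*} [CommRing R] [IsDomain R]
    [TopologicalSpace R] [IsTopologicalSemiring R] [T2Space R] [(𝓝[≠] (0 : R)).NeBot]
    {p q : MvPolynomial σ R} {f : (σ → R) → R} (hpq : ∀ x, eval x q * f x = eval x p)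
    {v x : σ → R} (hf : ContinuousAt (fun t : R => f (x + t • v)) 0) {m : ℕ}
    (hm : ∀ j < m, eval x ((directionalExpansion v q).coeff j) = 0) :
    eval x ((directionalExpansion v q).coeff m) * f x =
      eval x ((directionalExpansion v p).coeff m) := by
  simpa using coeff_mul_eq_coeff_of_X_pow_dvd hf
    (P := (directionalExpansion v p).map (eval x)) (Q := (directionalExpansion v q).map (eval x))
    (fun t => by simp only [eval_map_eval_directionalExpansion, hpq])
    (Polynomial.X_pow_dvd_iff.2 fun j hj => by rw [Polynomial.coeff_map, hm j hj])

section FirstNonvanishingLocus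

variable {σ R ι : Type*} [CommSemiring R]

/-- The stratum of index `i` of the stratification attached to a family `c` of polynomials:
the points at which `c i` is the first member of the family that does not vanish. -/
def firstNonvanishingLocus [LT ι] (c : ι → MvPolynomial σ R) (i : ι) : Set (σ → R) :=
  {x | eval x (c i) ≠ 0 ∧ ∀ j < i, eval x (c j) = 0}

theorem existsUnique_mem_firstNonvanishingLocus [LinearOrder ι] [WellFoundedLT ι]
    {c : ι → MvPolynomial σ R} {x : σ → R} (hx : ∃ i, eval x (c i) ≠ 0) :
    ∃! i, x ∈ firstNonvanishingLocus c i := by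
  obtain ⟨i, hi, hmin⟩ := exists_minimal_of_wellFoundedLT _ hx
  have hlt : ∀ j < i, eval x (c j) = 0 := fun j hj => by_contra fun h => hj.not_ge (hmin h hj.le)
  refine ⟨i, ⟨hi, hlt⟩, fun j ⟨hj, hjlt⟩ => ?_⟩
  exact le_antisymm (not_lt.1 fun h => hi (hjlt i h)) (not_lt.1 fun h => hj (hlt j h))

end FirstNonvanishingLocus

theorem sum_mul_self_eq_zero_iff_of_isFormallyReal {R ι : Type*} [NonUnitalNonAssocSemiring R]
    [IsFormallyReal R] {s : Finset ι} {a : ι → R} :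
    ∑ i ∈ s, a i * a i = 0 ↔ ∀ i ∈ s, a i = 0 := by
  classical
  refine ⟨fun h i hi => ?_, fun h => Finset.sum_eq_zero fun i hi => by simp [h i hi]⟩
  rw [← Finset.add_sum_erase s _ hi] at h
  have hsq : a i * a i = 0 :=
    IsFormallyReal.eq_zero_of_add_right (IsSumSq.mul_self _) (IsSumSq.sum_mul_self _ _) h
  by_contra hne
  exact IsFormallyReal.not_isSumNonzeroSq_zero (R := R) (hsq ▸ IsSumNonzeroSq.sq hne)

section ZariskiLocallyClosed

variable {σ K : Type*} [Field K]

/-- Zariski locally closed subsets of the affine space `K^σ`. They are encoded by ideals because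
over a general field a zero locus need not be cut out by a single polynomial. -/
def IsZariskiLocallyClosed (S : Set (σ → K)) : Prop :=
  ∃ I J : Ideal (MvPolynomial σ K), S = zeroLocus K I \ zeroLocus K J

theorem isZariskiLocallyClosed_firstNonvanishingLocus {ι : Type*} [LT ι]
    (c : ι → MvPolynomial σ K) (i : ι) :
    IsZariskiLocallyClosed (firstNonvanishingLocus c i) := by
  refine ⟨Ideal.span (c '' {j | j < i}), Ideal.span {c i}, ?_⟩
  ext x
  rw [zeroLocus_span, zeroLocus_span, Set.mem_sdiff, Set.mem_ofPred, Set.forall_mem_image]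
  simp [firstNonvanishingLocus, and_comm, aeval_eq_eval]

variable [Finite σ] [IsFormallyReal K]

theorem exists_zeroLocus_eq_setOf_eval_eq_zero (I : Ideal (MvPolynomial σ K)) :
    ∃ a : MvPolynomial σ K, zeroLocus K I = {x | eval x a = 0} := by
  obtain ⟨s, rfl⟩ := IsNoetherian.noetherian I
  refine ⟨∑ a ∈ s, a * a, ?_⟩
  ext x
  simp [zeroLocus_span, sum_mul_self_eq_zero_iff_of_isFormallyReal, aeval_eq_eval]

theorem IsZariskiLocallyClosed.exists_eq_setOf_diff_setOf {S : Set (σ → K)}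
    (hS : IsZariskiLocallyClosed S) :
    ∃ a b : MvPolynomial σ K, S = {x | eval x a = 0} \ {x | eval x b = 0} := by
  obtain ⟨I, J, rfl⟩ := hS
  obtain ⟨a, ha⟩ := exists_zeroLocus_eq_setOf_eval_eq_zero I
  obtain ⟨b, hb⟩ := exists_zeroLocus_eq_setOf_eval_eq_zero J
  exact ⟨a, b, by rw [ha, hb]⟩

end ZariskiLocallyClosed

theorem regulous_stratification_general {σ K : Type*} [Field K] [TopologicalSpace K]
    [IsTopologicalSemiring K] [T2Space K] [(𝓝[≠] (0 : K)).NeBot] {f : (σ → K) → K}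
    (hf : ∀ x v, Continuous fun t : K => f (x + t • v)) {p q : MvPolynomial σ K} (hq : q ≠ 0)
    (hpq : ∀ x, eval x q * f x = eval x p) :
    ∃ S : Fin (q.totalDegree + 1) → Set (σ → K),
      (∀ x, ∃! i, x ∈ S i) ∧ (∀ i, IsZariskiLocallyClosed (S i)) ∧
      ∀ i, ∃ a b : MvPolynomial σ K, ∀ x ∈ S i, eval x b ≠ 0 ∧ f x = eval x a / eval x b := by
  have : Infinite K := Set.infinite_univ_iff.1 (infinite_of_mem_nhds 0 Filter.univ_mem)
  obtain ⟨v, hv⟩ := exists_forall_eval_coeff_directionalExpansion_ne_zero hq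
  let c (i : Fin (q.totalDegree + 1)) := (directionalExpansion v q).coeff i
  refine ⟨firstNonvanishingLocus c,
    fun x => existsUnique_mem_firstNonvanishingLocus ⟨Fin.last _, hv x⟩,
    isZariskiLocallyClosed_firstNonvanishingLocus c,
    fun i => ⟨(directionalExpansion v p).coeff i, c i, fun x ⟨hne, hlt⟩ => ⟨hne, ?_⟩⟩⟩
  rw [eq_div_iff hne, mul_comm]
  exact eval_coeff_directionalExpansion_mul hpq (hf x v).continuousAt
    fun j hj => hlt ⟨j, hj.trans i.is_lt⟩ hj

/-- **Regulous functions, Théorème `thm.stratif`**: a `k`-regulous function on `ℝⁿ` admits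
a finite partition of `ℝⁿ` into pairwise disjoint Zariski locally closed strata on each of
which it is regular. -/
theorem regulous_stratification (n k : ℕ) (f : (Fin n → ℝ) → ℝ)
    (hf : IsRegulous n k f) :
    ∃ (m : ℕ) (S : Fin m → Set (Fin n → ℝ)),
      (∀ x : Fin n → ℝ, ∃! i : Fin m, x ∈ S i) ∧
      (∀ i : Fin m, ∃ a b : MvPolynomial (Fin n) ℝ,
        S i = {x | eval x a = 0} \ {x | eval x b = 0}) ∧
      (∀ i : Fin m, ∃ p q : MvPolynomial (Fin n) ℝ,
        ∀ x ∈ S i, eval x q ≠ 0 ∧ f x = eval x p / eval x q) := by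
  obtain ⟨hf, p, q, hq, hpq⟩ := hf
  have := hf.continuous
  obtain ⟨S, hpart, hlocallyClosed, hreg⟩ :=
    regulous_stratification_general (fun x v => by fun_prop) hq hpq
  exact ⟨_, S, hpart, fun i => (hlocallyClosed i).exists_eq_setOf_diff_setOf, hreg⟩
end

section
/- Let n be a natural number, let f : ℝⁿ → ℝ be a regulous (i.e. 0-regulous) function, and let x ∈ ℝⁿ with f(x) = 0. Then there exists a positive integer N such that the function y ↦ f(y)^N is Fréchet differentiable at x with derivative equal to the zero linear map. -/
open MvPolynomial

/-!
Write `f = p / q` and let `f y = e ≠ 0` with `q y ≠ 0`. Minimize the squared distance to `x` over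
the level set `p t = e`, `q t = 1` by the penalty method with weight `m`, made coercive by a large
even power of the coordinates. The gradient ideal of the penalized objective has finite colength
over `ℝ[e][m]`, so the distances at its critical points are integral over `ℝ[e][m]`. As `m → ∞`,
the leading coefficient in `m` of an integral equation yields a nonzero polynomial `Q`, independent
of `y`, with `Q(e, v) = 0` for some `0 ≤ v ≤ |y - x|²`. Here `v ≠ 0`, as otherwise points where `f`
is nearly `e` would tend to `x`, where `f` is continuous with value `0`. Comparing lowest-order
terms of `Q` gives the Łojasiewicz inequality `|f y| ^ N ≤ c |y - x|²` near `x`, first where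
`q ≠ 0` and then everywhere by density.
-/

open Filter hiding map
open Asymptotics
open scoped Topology Polynomial Polynomial.Bivariate

section CriticalPoints

variable {σ R : Type*} [CommRing R]

theorem finite_quotient_of_degree_eq_single [Finite σ] (m : MonomialOrder σ)
    {J : Ideal (MvPolynomial σ R)} {b : σ → MvPolynomial σ R} {d : ℕ} (hmem : ∀ i, b i ∈ J)
    (hunit : ∀ i, IsUnit (m.leadingCoeff (b i)))
    (hdeg : ∀ i, m.degree (b i) = Finsupp.single i d) :
    Module.Finite R (MvPolynomial σ R ⧸ J) := by
  let π := (Ideal.Quotient.mkₐ R J).toLinearMap.comp (restrictDegree σ R d).subtype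
  refine Module.Finite.of_surjective π fun y => ?_
  obtain ⟨f, rfl⟩ := Ideal.Quotient.mk_surjective y
  obtain ⟨g, r, hf, -, hr⟩ := m.div hunit f
  have hr_deg : r ∈ restrictDegree σ R d := by
    refine (mem_restrictDegree σ r d).2 fun c hc i => ?_
    have hci := hr c hc i
    rw [hdeg, Finsupp.single_le_iff, not_le] at hci
    exact hci.le
  have hlin : Finsupp.linearCombination _ b g ∈ J := by
    rw [Finsupp.linearCombination_apply]
    exact J.sum_mem fun i _ => J.mul_mem_left _ (hmem i)
  refine ⟨⟨r, hr_deg⟩, (Ideal.Quotient.eq.2 ?_).symm⟩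
  simpa [hf] using hlin

theorem totalDegree_pderiv_le (i : σ) (L : MvPolynomial σ R) :
    (pderiv i L).totalDegree ≤ L.totalDegree := by
  classical
  conv_lhs => rw [L.as_sum, map_sum]
  refine totalDegree_finsetSum_le fun u hu => ?_
  rw [pderiv_monomial]
  exact (totalDegree_monomial_le _ _).trans
    ((Finsupp.degree_mono tsub_le_self).trans (le_totalDegree hu))

variable [Fintype σ]

/-- The perturbation of `L` by the sum of the `d`-th powers of the variables. For `d` even and
large it is coercive over `ℝ`, and its gradient ideal has finite colength over the coefficients. -/
noncomputable def powerPerturbation (L : MvPolynomial σ R) (d : ℕ) : MvPolynomial σ R :=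
  L + ∑ i, X i ^ d

theorem pderiv_powerPerturbation (L : MvPolynomial σ R) (d : ℕ) (i : σ) :
    pderiv i (powerPerturbation L d) =
      monomial (Finsupp.single i (d - 1)) (d : R) + pderiv i L := by
  classical
  rw [powerPerturbation, map_add, map_sum, Finset.sum_eq_single i, pderiv_pow, pderiv_X_self,
    mul_one, X_pow_eq_monomial, ← map_natCast (C : R →+* MvPolynomial σ R) d, C_mul_monomial,
    mul_one, add_comm]
  · intro j _ hj
    rw [pderiv_pow, pderiv_X_of_ne hj, mul_zero]
  · simp

theorem finite_quotient_pderiv_powerPerturbation (L : MvPolynomial σ R) {d : ℕ}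
    (hd : L.totalDegree + 1 < d) (hunit : IsUnit (d : R)) :
    Module.Finite R (MvPolynomial σ R ⧸
      Ideal.span (Set.range fun i => pderiv i (powerPerturbation L d))) := by
  cases subsingleton_or_nontrivial R
  · infer_instance
  classical
  let _ : LinearOrder σ := LinearOrder.lift' (Fintype.equivFin σ) (Fintype.equivFin σ).injective
  have hlead (i : σ) : MonomialOrder.degLex.degree (monomial (Finsupp.single i (d - 1)) (d : R)) =
      Finsupp.single i (d - 1) := by
    rw [MonomialOrder.degree_monomial, if_neg hunit.ne_zero]
  have hlt (i : σ) : MonomialOrder.degLex.toSyn (MonomialOrder.degLex.degree (pderiv i L)) <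
      MonomialOrder.degLex.toSyn
        (MonomialOrder.degLex.degree (monomial (Finsupp.single i (d - 1)) (d : R))) := by
    by_contra! h
    have h_total := degLex_totalDegree_monotone h
    rw [totalDegree_monomial _ hunit.ne_zero, Finsupp.sum_single_index rfl] at h_total
    have h_pderiv := totalDegree_pderiv_le i L
    lia
  refine finite_quotient_of_degree_eq_single MonomialOrder.degLex (d := d - 1)
    (fun i => Ideal.subset_span ⟨i, rfl⟩) (fun i => ?_) (fun i => ?_)
  · rwa [pderiv_powerPerturbation, MonomialOrder.leadingCoeff_add_of_lt (hlt i),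
      MonomialOrder.leadingCoeff_monomial]
  · rw [pderiv_powerPerturbation, MonomialOrder.degree_add_of_lt (hlt i), hlead]

theorem exists_monic_eval₂_critical_eq_zero (L h : MvPolynomial σ R) {d : ℕ}
    (hd : L.totalDegree + 1 < d) (hunit : IsUnit (d : R)) :
    ∃ P : R[X], P.Monic ∧ ∀ {S : Type*} [CommRing S] (φ : R →+* S) (w : σ → S),
      (∀ i, eval₂ φ w (pderiv i (powerPerturbation L d)) = 0) →
        P.eval₂ φ (eval₂ φ w h) = 0 := by
  have := finite_quotient_pderiv_powerPerturbation L hd hunit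
  set J := Ideal.span (Set.range fun i => pderiv i (powerPerturbation L d))
  obtain ⟨P, hP, hroot⟩ := IsIntegral.of_finite R (Ideal.Quotient.mk J h)
  refine ⟨P, hP, fun φ w hw => ?_⟩
  have hJ : J ≤ RingHom.ker (eval₂Hom φ w) := Ideal.span_le.2 (by rintro _ ⟨i, rfl⟩; exact hw i)
  have hPJ : P.eval₂ C h ∈ J := by
    rw [← Ideal.Quotient.eq_zero_iff_mem, Polynomial.hom_eval₂]
    exact hroot
  have hzero : eval₂Hom φ w (P.eval₂ C h) = 0 := hJ hPJ
  rwa [Polynomial.hom_eval₂, eval₂Hom_comp_C] at hzero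

end CriticalPoints

section Minimizers

variable {σ : Type*}

theorem hasDerivAt_eval_update {𝕜 : Type*} [NontriviallyNormedField 𝕜] [DecidableEq σ]
    (w : σ → 𝕜) (i : σ) (G : MvPolynomial σ 𝕜) (t : 𝕜) :
    HasDerivAt (fun s => eval (Function.update w i s) G)
      (eval (Function.update w i t) (pderiv i G)) t := by
  induction G using MvPolynomial.induction_on with
  | C a => simpa using hasDerivAt_const t a
  | add p q hp hq => simp only [map_add]; exact hp.add hq
  | mul_X p j hp =>
    have hX : HasDerivAt (fun s => eval (Function.update w i s) (X j))
        (eval (Function.update w i t) (pderiv i (X j))) t := by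
      obtain rfl | hj := eq_or_ne j i
      · simpa using hasDerivAt_id' t
      · simpa [pderiv_X_of_ne hj, hj] using hasDerivAt_const t (w j)
    simp only [Derivation.leibniz, map_mul, map_add, smul_eq_mul]
    exact (hp.mul hX).congr_deriv (by ring)

theorem eval_pderiv_eq_zero_of_forall_le {G : MvPolynomial σ ℝ} {w : σ → ℝ}
    (hw : ∀ w', eval w G ≤ eval w' G) (i : σ) : eval w (pderiv i G) = 0 := by
  classical
  have hmin : IsLocalMin (fun t => eval (Function.update w i t) G) (w i) :=
    Eventually.of_forall fun t => by simpa only [Function.update_eq_self] using hw _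
  simpa only [Function.update_eq_self] using
    hmin.hasDerivAt_eq_zero (hasDerivAt_eval_update w i G (w i))

variable [Fintype σ]

theorem tendsto_sum_pow_cocompact_atTop {d : ℕ} (hd : Even d) (hd₀ : d ≠ 0) :
    Tendsto (fun w : σ → ℝ => ∑ i, w i ^ d) (cocompact (σ → ℝ)) atTop := by
  have hnorm (w : σ → ℝ) : ‖w‖ + -1 ≤ ∑ i, w i ^ d := by
    have hsum : 0 ≤ ∑ i, w i ^ d := Finset.sum_nonneg fun i _ => hd.pow_nonneg (w i)
    rw [← sub_eq_add_neg, sub_le_iff_le_add, pi_norm_le_iff_of_nonneg (by positivity)]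
    intro i
    have habs : |w i| ≤ w i ^ d + 1 := by
      rw [← hd.pow_abs]
      obtain h | h := le_total |w i| 1
      · linarith [pow_nonneg (abs_nonneg (w i)) d]
      · linarith [le_self_pow₀ h hd₀]
    have hle : w i ^ d ≤ ∑ j, w j ^ d :=
      Finset.single_le_sum (fun j _ => hd.pow_nonneg (w j)) (Finset.mem_univ i)
    exact habs.trans (by linarith)
  exact tendsto_atTop_mono hnorm
    (tendsto_atTop_add_const_right _ _ (tendsto_norm_cocompact_atTop (E := σ → ℝ)))

theorem exists_forall_eval_powerPerturbation_le {L : MvPolynomial σ ℝ} (hL : ∀ w, 0 ≤ eval w L)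
    {d : ℕ} (hd : Even d) (hd₀ : d ≠ 0) :
    ∃ w, ∀ w', eval w (powerPerturbation L d) ≤ eval w' (powerPerturbation L d) := by
  refine (MvPolynomial.continuous_eval _).exists_forall_le
    (tendsto_atTop_mono (fun w => ?_) (tendsto_sum_pow_cocompact_atTop hd hd₀))
  simpa [powerPerturbation] using hL w

end Minimizers

section PenaltyMethod

theorem eq_zero_of_tendsto_of_sum_mul_pow_eq_zero {ι : Type*} {l : Filter ι} [l.NeBot]
    {m : ι → ℝ} (hm : Tendsto m l atTop) {d : ℕ} {a : ℕ → ι → ℝ} {b : ℕ → ℝ}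
    (ha : ∀ j, Tendsto (a j) l (𝓝 (b j)))
    (hzero : ∀ i, ∑ j ∈ Finset.range (d + 1), a j i * m i ^ j = 0) : b d = 0 := by
  have hlower : Tendsto (fun i => -∑ j ∈ Finset.range d, a j i * (m i ^ j / m i ^ d)) l (𝓝 0) := by
    have hterm : ∀ j ∈ Finset.range d,
        Tendsto (fun i => a j i * (m i ^ j / m i ^ d)) l (𝓝 (b j * 0)) := fun j hj =>
      (ha j).mul ((tendsto_pow_div_pow_atTop_zero (Finset.mem_range.1 hj)).comp hm)
    simpa using (tendsto_finsetSum _ hterm).neg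
  refine tendsto_nhds_unique (ha d) (hlower.congr' ?_)
  filter_upwards [hm.eventually_gt_atTop 0] with i hi
  have hsum := hzero i
  rw [Finset.sum_range_succ] at hsum
  have hpow : m i ^ d ≠ 0 := by positivity
  simp only [← mul_div_assoc]
  rw [← Finset.sum_div, ← neg_div, div_eq_iff hpow]
  linarith

theorem exists_tendsto_of_penalty {ι α : Type*} {l : Ultrafilter ι} {m : ι → ℝ}
    (hm : Tendsto m l atTop) {H K T : α → ℝ} (hH : ∀ a, 0 ≤ H a) (hK : ∀ a, 0 ≤ K a)
    (hT : ∀ a, 0 ≤ T a) {w : ι → α} {a₀ : α}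
    (hw : ∀ i, m i * H (w i) + m i ^ 2 * K (w i) + T (w i) ≤ m i * H a₀ + T a₀) :
    ∃ v ∈ Set.Icc 0 (H a₀), Tendsto (H ∘ w) l (𝓝 v) ∧ Tendsto (K ∘ w) l (𝓝 0) := by
  have hTm : Tendsto (fun i => T a₀ / m i) l (𝓝 0) := tendsto_const_nhds.div_atTop hm
  have hH_le : ∀ᶠ i in l, H (w i) ≤ H a₀ + T a₀ / m i := by
    filter_upwards [hm.eventually_gt_atTop 0] with i hi
    rw [← sub_le_iff_le_add', le_div_iff₀ hi]
    linarith [hw i, hT (w i), mul_nonneg (sq_nonneg (m i)) (hK (w i))]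
  have hK_le : ∀ᶠ i in l, K (w i) ≤ (H a₀ + T a₀ / m i) / m i := by
    filter_upwards [hm.eventually_gt_atTop 0] with i hi
    rw [le_div_iff₀ hi, ← sub_le_iff_le_add', le_div_iff₀ hi]
    linarith [hw i, hT (w i), mul_nonneg hi.le (hH (w i))]
  have hbound : Tendsto (fun i => H a₀ + T a₀ / m i) l (𝓝 (H a₀)) := by
    simpa using hTm.const_add (H a₀)
  have hmem : ∀ᶠ i in l, H (w i) ∈ Set.Icc 0 (H a₀ + 1) := by
    filter_upwards [hH_le, hbound.eventually_le_const (lt_add_one _)] with i hi hi'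
    exact ⟨hH _, hi.trans hi'⟩
  obtain ⟨v, hv, hlim⟩ := isCompact_Icc.ultrafilter_le_nhds' (l.map (H ∘ w)) hmem
  exact ⟨v, ⟨hv.1, le_of_tendsto_of_tendsto hlim hbound hH_le⟩, hlim,
    squeeze_zero' (Eventually.of_forall fun _ => hK _) hK_le (hbound.div_atTop hm)⟩

end PenaltyMethod

section AsymptoticValues

variable {A : Type*} [CommRing A]

theorem eval₂_eval₂RingHom_swap {S : Type*} [CommRing S] (ψ : A →+* S)
    (x y : S) (P : A[X][Y]) :
    (Polynomial.Bivariate.swap P).eval₂ (Polynomial.eval₂RingHom ψ y) x =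
      P.eval₂ (Polynomial.eval₂RingHom ψ x) y := by
  have hcomp : (Polynomial.eval₂RingHom (Polynomial.eval₂RingHom ψ y) x).comp
      (Polynomial.Bivariate.swap (R := A)).toRingHom =
        Polynomial.eval₂RingHom (Polynomial.eval₂RingHom ψ x) y := by
    ext <;> simp [Polynomial.Bivariate.swap_apply]
  exact DFunLike.congr_fun hcomp P

theorem exists_eval₂_eq_zero_of_tendsto_atTop {P : A[X][Y]} (hP : P ≠ 0) :
    ∃ Q : A[X], Q ≠ 0 ∧ ∀ (ψ : A →+* ℝ) {ι : Type*} {l : Filter ι} [l.NeBot] {m s : ι → ℝ}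
      {v : ℝ}, Tendsto m l atTop → Tendsto s l (𝓝 v) →
        (∀ i, P.eval₂ (Polynomial.eval₂RingHom ψ (m i)) (s i) = 0) → Q.eval₂ ψ v = 0 := by
  let P' := Polynomial.Bivariate.swap P
  refine ⟨P'.leadingCoeff, by simpa [P'] using hP, fun ψ _ l _ m s v hm hs hzero => ?_⟩
  refine eq_zero_of_tendsto_of_sum_mul_pow_eq_zero (d := P'.natDegree)
    (a := fun j i => (P'.coeff j).eval₂ ψ (s i)) (b := fun j => (P'.coeff j).eval₂ ψ v) hm
    (fun j => ?_) (fun i => ?_)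
  · simp only [← Polynomial.eval_map]
    exact ((Polynomial.continuous _).tendsto v).comp hs
  · rw [← hzero i, ← eval₂_eval₂RingHom_swap, Polynomial.eval₂_eq_sum_range]
    rfl

theorem map_powerPerturbation {τ R S : Type*} [Fintype τ] [CommRing R] [CommRing S] (φ : R →+* S)
    (L : MvPolynomial τ R) (d : ℕ) :
    map φ (powerPerturbation L d) = powerPerturbation (map φ L) d := by
  simp [powerPerturbation]

variable {τ : Type*}

/-- The penalized objective for minimizing `h` subject to `K = 0`, with the penalty weight `m` as
the new coefficient variable. It is scaled by `m`, so that a coercive perturbation with unit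
coefficients, which must disappear as `m → ∞`, has relative weight `1 / m`. -/
noncomputable def penaltyPolynomial (h K : MvPolynomial τ A) : MvPolynomial τ A[X] :=
  C Polynomial.X * map Polynomial.C h + C (Polynomial.X ^ 2) * map Polynomial.C K

theorem map_penaltyPolynomial {S : Type*} [CommRing S] (ψ : A →+* S) (m : S)
    (h K : MvPolynomial τ A) :
    map (Polynomial.eval₂RingHom ψ m) (penaltyPolynomial h K) =
      C m * map ψ h + C (m ^ 2) * map ψ K := by
  have hcomp : (Polynomial.eval₂RingHom ψ m).comp Polynomial.C = ψ := by ext; simp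
  simp [penaltyPolynomial, MvPolynomial.map_map, hcomp]

theorem eval_map_powerPerturbation_penaltyPolynomial [Fintype τ] (ψ : A →+* ℝ) (m : ℝ)
    (h K : MvPolynomial τ A) (d : ℕ) (w : τ → ℝ) :
    eval w (map (Polynomial.eval₂RingHom ψ m) (powerPerturbation (penaltyPolynomial h K) d)) =
      m * eval₂ ψ w h + m ^ 2 * eval₂ ψ w K + ∑ i, w i ^ d := by
  rw [map_powerPerturbation, map_penaltyPolynomial]
  simp [powerPerturbation, eval_map]

theorem exists_monic_eval₂_penalized_minimizer_eq_zero [Fintype τ] [Algebra ℚ A]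
    (h K : MvPolynomial τ A) :
    ∃ P : A[X][Y], P.Monic ∧ ∃ d, Even d ∧ ∀ ψ : A →+* ℝ,
      (∀ w, 0 ≤ eval₂ ψ w h) → (∀ w, 0 ≤ eval₂ ψ w K) → ∀ m ≥ 0, ∃ w,
        (∀ w', m * eval₂ ψ w h + m ^ 2 * eval₂ ψ w K + ∑ i, w i ^ d ≤
          m * eval₂ ψ w' h + m ^ 2 * eval₂ ψ w' K + ∑ i, w' i ^ d) ∧
        P.eval₂ (Polynomial.eval₂RingHom ψ m) (eval₂ ψ w h) = 0 := by
  set L := penaltyPolynomial h K with hL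
  set d := 2 * (L.totalDegree + 1)
  have hd : Even d := even_two_mul _
  have hd₀ : d ≠ 0 := by positivity
  have hunit : IsUnit (d : A[X]) := by
    have := (IsUnit.mk0 (d : ℚ) (mod_cast hd₀)).map (algebraMap ℚ A[X])
    rwa [map_natCast] at this
  obtain ⟨P, hP, hcrit⟩ := exists_monic_eval₂_critical_eq_zero L (map Polynomial.C h)
    (by lia : L.totalDegree + 1 < d) hunit
  refine ⟨P, hP, d, hd, fun ψ hh hK m hm => ?_⟩
  set φ := Polynomial.eval₂RingHom ψ m with hφ
  have hcomp : φ.comp Polynomial.C = ψ := by ext; simp [φ]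
  have hnonneg (w : τ → ℝ) : 0 ≤ eval w (map φ L) := by
    have := hh w
    have := hK w
    simp only [φ, L, map_penaltyPolynomial, map_add, map_mul, eval_C, eval_map]
    positivity
  obtain ⟨w, hw⟩ := exists_forall_eval_powerPerturbation_le hnonneg hd hd₀
  have hgrad (i : τ) : eval₂ φ w (pderiv i (powerPerturbation L d)) = 0 := by
    rw [← eval_map, ← pderiv_map, map_powerPerturbation]
    exact eval_pderiv_eq_zero_of_forall_le hw i
  refine ⟨w, ?_, by simpa only [eval₂_map, hcomp] using hcrit φ w hgrad⟩
  simpa only [← map_powerPerturbation, hφ, hL,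
    eval_map_powerPerturbation_penaltyPolynomial] using hw

theorem exists_algebraic_asymptotic_value [Finite τ] [Nontrivial A] [Algebra ℚ A]
    (h K : MvPolynomial τ A) :
    ∃ Q : A[X], Q ≠ 0 ∧ ∀ ψ : A →+* ℝ, (∀ w, 0 ≤ eval₂ ψ w h) → (∀ w, 0 ≤ eval₂ ψ w K) →
      ∀ w₀, eval₂ ψ w₀ K = 0 → ∃ v ∈ Set.Icc 0 (eval₂ ψ w₀ h), Q.eval₂ ψ v = 0 ∧
        ∃ l : Filter (τ → ℝ), l.NeBot ∧
          Tendsto (fun w => eval₂ ψ w h) l (𝓝 v) ∧ Tendsto (fun w => eval₂ ψ w K) l (𝓝 0) := by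
  cases nonempty_fintype τ
  obtain ⟨P, hP, d, hd, hmin⟩ := exists_monic_eval₂_penalized_minimizer_eq_zero h K
  obtain ⟨Q, hQ, hlim⟩ := exists_eval₂_eq_zero_of_tendsto_atTop hP.ne_zero
  refine ⟨Q, hQ, fun ψ hh hK w₀ hw₀ => ?_⟩
  choose w hw hroot using fun k : ℕ => hmin ψ hh hK k k.cast_nonneg
  have hm : Tendsto (fun k : ℕ => (k : ℝ)) (hyperfilter ℕ) atTop :=
    tendsto_natCast_atTop_atTop.mono_left Nat.hyperfilter_le_atTop
  obtain ⟨v, hv, hlim_h, hlim_K⟩ := exists_tendsto_of_penalty hm hh hK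
    (T := fun w => ∑ i, w i ^ d) (w := w) (a₀ := w₀)
    (fun w => Finset.sum_nonneg fun i _ => hd.pow_nonneg (w i)) fun k => by
      simpa [hw₀] using hw k w₀
  exact ⟨v, hv, hlim ψ hm hlim_h hroot, Filter.map w (hyperfilter ℕ), inferInstance, hlim_h, hlim_K⟩

end AsymptoticValues

section BivariateGrowth

theorem exists_pow_isBigO_eval {𝕜 : Type*} [NormedField 𝕜] {b : 𝕜[X]} (hb : b ≠ 0) :
    ∃ k : ℕ, (fun e : 𝕜 => e ^ k) =O[𝓝 0] fun e => b.eval e := by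
  obtain ⟨c, hbc, hc⟩ := b.exists_eq_pow_rootMultiplicity_mul_and_not_dvd hb 0
  rw [Polynomial.dvd_iff_isRoot] at hc
  have hone : (fun _ : 𝕜 => (1 : 𝕜)) =O[𝓝 0] fun e => c.eval e :=
    (isBigO_const_const 1 hc _).trans
      ((isEquivalent_const_iff_tendsto hc).2 c.continuousAt).symm.isBigO
  refine ⟨b.rootMultiplicity 0, ?_⟩
  conv_rhs => rw [hbc]
  simpa using (isBigO_refl (fun e : 𝕜 => e ^ b.rootMultiplicity 0) (𝓝 0)).mul hone

theorem continuous_evalEval {R : Type*} [CommSemiring R] [TopologicalSpace R]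
    [IsTopologicalSemiring R] (P : R[X][Y]) :
    Continuous fun z : R × R => P.evalEval z.1 z.2 := by
  have hsum : (fun z : R × R => P.evalEval z.1 z.2) =
      fun z => ∑ i ∈ Finset.range (P.natDegree + 1), (P.coeff i).eval z.1 * z.2 ^ i := by
    ext z
    rw [← Polynomial.eval₂_evalRingHom, Polynomial.eval₂_eq_sum_range]
    rfl
  rw [hsum]
  fun_prop

theorem exists_pow_le_mul_of_evalEval_eq_zero_of_coeff_zero_ne_zero {P : ℝ[X][Y]}
    (hP : P.coeff 0 ≠ 0) :
    ∃ k : ℕ, ∃ c ≥ 0, ∀ᶠ e in 𝓝 (0 : ℝ), ∀ v ∈ Set.Icc (0 : ℝ) 1, P.evalEval e v = 0 →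
      |e| ^ k ≤ c * v := by
  obtain ⟨k, hk⟩ := exists_pow_isBigO_eval hP
  obtain ⟨c, hc, hbound⟩ := hk.exists_nonneg
  obtain ⟨M, hM⟩ := ((isCompact_Icc (a := (-1 : ℝ)) (b := 1)).prod
    (isCompact_Icc (a := (0 : ℝ)) (b := 1))).exists_bound_of_continuousOn
      (continuous_evalEval P.divX).continuousOn
  have hM₀ : 0 ≤ M := (norm_nonneg _).trans (hM (0, 0) (by simp))
  refine ⟨k, c * M, by positivity, ?_⟩
  filter_upwards [hbound.bound, Icc_mem_nhds (show (-1 : ℝ) < 0 by simp) one_pos]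
    with e he he_mem v hv hroot
  have hcoeff : (P.coeff 0).eval e = -(P.divX.evalEval e v * v) := by
    rw [← P.divX_mul_X_add, Polynomial.evalEval_add, Polynomial.evalEval_mul,
      Polynomial.evalEval_X, Polynomial.evalEval_C] at hroot
    linarith
  calc |e| ^ k = ‖e ^ k‖ := by rw [norm_pow, Real.norm_eq_abs]
    _ ≤ c * ‖(P.coeff 0).eval e‖ := he
    _ = c * (‖P.divX.evalEval e v‖ * v) := by
      rw [hcoeff, norm_neg, norm_mul, Real.norm_of_nonneg hv.1]
    _ ≤ c * (M * v) := by
      have := hM (e, v) ⟨he_mem, hv⟩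
      have := hv.1
      gcongr
    _ = c * M * v := by ring

theorem exists_pow_le_mul_of_evalEval_eq_zero {P : ℝ[X][Y]} (hP : P ≠ 0) :
    ∃ k : ℕ, ∃ c ≥ 0, ∀ᶠ e in 𝓝 (0 : ℝ), ∀ v ∈ Set.Ioc (0 : ℝ) 1, P.evalEval e v = 0 →
      |e| ^ k ≤ c * v := by
  obtain ⟨P', hPP', hP'⟩ := P.exists_eq_pow_rootMultiplicity_mul_and_not_dvd hP 0
  rw [Polynomial.C_0, sub_zero] at hPP' hP'
  obtain ⟨k, c, hc, h⟩ := exists_pow_le_mul_of_evalEval_eq_zero_of_coeff_zero_ne_zero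
    (mt Polynomial.X_dvd_iff.2 hP')
  refine ⟨k, c, hc, h.mono fun e he v hv hroot => he v ⟨hv.1.le, hv.2⟩ ?_⟩
  rw [hPP', Polynomial.evalEval_mul, Polynomial.evalEval_pow, Polynomial.evalEval_X] at hroot
  exact (mul_eq_zero.1 hroot).resolve_left (pow_ne_zero _ hv.1.ne')

end BivariateGrowth

section LevelSets

variable {σ : Type*}

/-- The squared distance from `z` to `x` in the variables `(z, t)` of
`levelPolynomial`. -/
noncomputable def sqDistPolynomial [Fintype σ] (x : σ → ℝ) : MvPolynomial (Option σ) ℝ[X] :=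
  ∑ i, (X (some i) - C (Polynomial.C (x i))) ^ 2

/-- The polynomial `(p(z) t - e)² + (q(z) t - 1)²`, where the variable `none` is `t` and the
coefficient variable is `e`. Its real zeros are the points of the level set `p / q = e` with
`q ≠ 0`, the latter being forced by `t = 1 / q(z)`. -/
noncomputable def levelPolynomial (p q : MvPolynomial σ ℝ) : MvPolynomial (Option σ) ℝ[X] :=
  (rename some (map Polynomial.C p) * X none - C Polynomial.X) ^ 2 +
    (rename some (map Polynomial.C q) * X none - 1) ^ 2

theorem eval₂_sqDistPolynomial [Fintype σ] (x : σ → ℝ) (e : ℝ) (w : Option σ → ℝ) :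
    eval₂ (Polynomial.evalRingHom e) w (sqDistPolynomial x) = ∑ i, (w (some i) - x i) ^ 2 := by
  simp [sqDistPolynomial]

theorem eval₂_levelPolynomial (p q : MvPolynomial σ ℝ) (e : ℝ) (w : Option σ → ℝ) :
    eval₂ (Polynomial.evalRingHom e) w (levelPolynomial p q) =
      (eval (w ∘ some) p * w none - e) ^ 2 + (eval (w ∘ some) q * w none - 1) ^ 2 := by
  have hcomp : (Polynomial.evalRingHom e).comp Polynomial.C = RingHom.id ℝ := by ext; simp
  have hrename (r : MvPolynomial σ ℝ) :
      eval₂ (Polynomial.evalRingHom e) w (rename some (map Polynomial.C r)) =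
        eval (w ∘ some) r := by
    rw [eval₂_rename, eval₂_map, hcomp, eval₂_id]
  simp [levelPolynomial, hrename]

theorem tendsto_of_sq_sub_le {α : Type*} {l : Filter α} {a b : α → ℝ} {c : ℝ}
    (hab : ∀ i, (a i - c) ^ 2 ≤ b i) (hb : Tendsto b l (𝓝 0)) : Tendsto a l (𝓝 c) := by
  rw [tendsto_iff_dist_tendsto_zero]
  exact squeeze_zero (fun _ => dist_nonneg) (fun i => Real.abs_le_sqrt (hab i))
    (by simpa using hb.sqrt)

theorem level_eq_zero_of_tendsto [Fintype σ] {p q : MvPolynomial σ ℝ} {f : (σ → ℝ) → ℝ}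
    {x : σ → ℝ} (hf : ContinuousAt f x) (hfx : f x = 0)
    (hpq : ∀ᶠ y in 𝓝 x, eval y q * f y = eval y p) {e : ℝ} {l : Filter (Option σ → ℝ)} [l.NeBot]
    (hdist : Tendsto (fun w => eval₂ (Polynomial.evalRingHom e) w (sqDistPolynomial x)) l (𝓝 0))
    (hlevel : Tendsto (fun w => eval₂ (Polynomial.evalRingHom e) w (levelPolynomial p q)) l
      (𝓝 0)) :
    e = 0 := by
  simp only [eval₂_sqDistPolynomial] at hdist
  simp only [eval₂_levelPolynomial] at hlevel
  have hz : Tendsto (fun w : Option σ → ℝ => w ∘ some) l (𝓝 x) :=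
    tendsto_pi_nhds.2 fun i => tendsto_of_sq_sub_le (fun w => Finset.single_le_sum
      (f := fun i => (w (some i) - x i) ^ 2) (fun _ _ => sq_nonneg _) (Finset.mem_univ i)) hdist
  have hp : Tendsto (fun w : Option σ → ℝ => eval (w ∘ some) p * w none) l (𝓝 e) :=
    tendsto_of_sq_sub_le (fun _ => le_add_of_nonneg_right (sq_nonneg _)) hlevel
  have hq : Tendsto (fun w : Option σ → ℝ => eval (w ∘ some) q * w none) l (𝓝 1) :=
    tendsto_of_sq_sub_le (fun _ => le_add_of_nonneg_left (sq_nonneg _)) hlevel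
  have hqf : Tendsto (fun w : Option σ → ℝ => eval (w ∘ some) p * w none) l (𝓝 (f x * 1)) := by
    refine ((hf.tendsto.comp hz).mul hq).congr' ?_
    filter_upwards [hz.eventually hpq] with w hw
    rw [← hw, Function.comp_apply]
    ring
  simpa [hfx] using tendsto_nhds_unique hp hqf

theorem exists_evalEval_eq_zero_of_level [Fintype σ] {p q : MvPolynomial σ ℝ}
    {f : (σ → ℝ) → ℝ} {x : σ → ℝ} (hf : ContinuousAt f x) (hfx : f x = 0)
    (hpq : ∀ᶠ y in 𝓝 x, eval y q * f y = eval y p) :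
    ∃ Q : ℝ[X][Y], Q ≠ 0 ∧ ∀ y e, eval y q ≠ 0 → eval y q * e = eval y p → e ≠ 0 →
      ∃ v ∈ Set.Ioc 0 (∑ i, (y i - x i) ^ 2), Q.evalEval e v = 0 := by
  obtain ⟨Q, hQ, hvalue⟩ :=
    exists_algebraic_asymptotic_value (sqDistPolynomial x) (levelPolynomial p q)
  refine ⟨Q, hQ, fun y e hqy hye he => ?_⟩
  let w₀ : Option σ → ℝ := fun o => o.elim (eval y q)⁻¹ y
  have hw₀ : w₀ ∘ some = y := rfl
  have hlevel : eval₂ (Polynomial.evalRingHom e) w₀ (levelPolynomial p q) = 0 := by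
    have hcancel : eval y q * e * (eval y q)⁻¹ = e := by field_simp
    rw [eval₂_levelPolynomial, hw₀, ← hye]
    simp [w₀, hqy, hcancel]
  obtain ⟨v, ⟨hv, hv_le⟩, hroot, l, _, hdist, hzero⟩ := hvalue (Polynomial.evalRingHom e)
    (fun w => by rw [eval₂_sqDistPolynomial]; positivity)
    (fun w => by rw [eval₂_levelPolynomial]; positivity) w₀ hlevel
  rw [Polynomial.eval₂_evalRingHom] at hroot
  rw [eval₂_sqDistPolynomial] at hv_le
  have hv_ne : v ≠ 0 := by
    rintro rfl
    exact he (level_eq_zero_of_tendsto hf hfx hpq hdist hzero)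
  exact ⟨v, ⟨hv.lt_of_ne' hv_ne, hv_le⟩, hroot⟩

end LevelSets

section LojasiewiczInequality

theorem dense_setOf_eval_ne_zero_s8 {σ R : Type*} [CommRing R] [IsDomain R] [TopologicalSpace R]
    [T1Space R] [∀ r : R, (𝓝[≠] r).NeBot] {q : MvPolynomial σ R} (hq : q ≠ 0) :
    Dense {y : σ → R | eval y q ≠ 0} := by
  intro y
  rw [mem_closure_iff_frequently]
  intro hzero
  simp only [Set.mem_ofPred_eq, not_not, nhds_pi] at hzero
  obtain ⟨I, t, ht, hsub⟩ := mem_pi'.1 hzero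
  refine hq (funext_set t (fun i => infinite_of_mem_nhds (y i) (ht i)) fun z hz => ?_)
  rw [map_zero]
  exact hsub fun i _ => hz i trivial

variable {σ : Type*} [Fintype σ] {p q : MvPolynomial σ ℝ} {f : (σ → ℝ) → ℝ} {x : σ → ℝ}

theorem sum_sq_sub_le_card_mul_norm_sq (y x : σ → ℝ) :
    ∑ i, (y i - x i) ^ 2 ≤ Fintype.card σ * ‖y - x‖ ^ 2 := by
  rw [← nsmul_eq_mul]
  refine Finset.sum_le_card_nsmul _ _ _ fun i _ => ?_
  rw [← sq_abs]
  gcongr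
  exact norm_le_pi_norm (y - x) i

theorem exists_pow_le_mul_norm_sq_of_eval_ne_zero (hf : ContinuousAt f x) (hfx : f x = 0)
    (hpq : ∀ᶠ y in 𝓝 x, eval y q * f y = eval y p) :
    ∃ N > 0, ∃ c, ∀ᶠ y in 𝓝 x, eval y q ≠ 0 → |f y| ^ N ≤ c * ‖y - x‖ ^ 2 := by
  obtain ⟨Q, hQ, hvalue⟩ := exists_evalEval_eq_zero_of_level hf hfx hpq
  obtain ⟨k, c, hc, hgrowth⟩ := exists_pow_le_mul_of_evalEval_eq_zero hQ
  have hf₀ : Tendsto f (𝓝 x) (𝓝 0) := hfx ▸ hf.tendsto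
  have hf_le : ∀ᶠ y in 𝓝 x, |f y| ≤ 1 :=
    hf₀.abs.eventually_le_const (by simp)
  have hdist_le : ∀ᶠ y in 𝓝 x, ∑ i, (y i - x i) ^ 2 ≤ 1 := by
    have hdist : Continuous fun y : σ → ℝ => ∑ i, (y i - x i) ^ 2 := by fun_prop
    exact (hdist.tendsto x).eventually_le_const (by simp)
  refine ⟨k + 1, k.succ_pos, c * Fintype.card σ, ?_⟩
  filter_upwards [hpq, hf₀.eventually hgrowth, hf_le, hdist_le] with y hy hroot_le hfy hdist hqy
  obtain hfy₀ | hfy₀ := eq_or_ne (f y) 0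
  · rw [hfy₀, abs_zero, zero_pow k.succ_ne_zero]
    positivity
  obtain ⟨v, hv, hroot⟩ := hvalue y (f y) hqy hy hfy₀
  calc |f y| ^ (k + 1) ≤ |f y| ^ k := pow_le_pow_of_le_one (abs_nonneg _) hfy k.le_succ
    _ ≤ c * v := hroot_le v ⟨hv.1, hv.2.trans hdist⟩ hroot
    _ ≤ c * (Fintype.card σ * ‖y - x‖ ^ 2) := by
      gcongr
      exact hv.2.trans (sum_sq_sub_le_card_mul_norm_sq y x)
    _ = c * Fintype.card σ * ‖y - x‖ ^ 2 := by ring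

theorem exists_pow_isBigO_norm_sub_sq (hf : ∀ᶠ y in 𝓝 x, ContinuousAt f y) (hfx : f x = 0)
    (hq : q ≠ 0) (hpq : ∀ᶠ y in 𝓝 x, eval y q * f y = eval y p) :
    ∃ N > 0, (fun y => f y ^ N) =O[𝓝 x] fun y => ‖y - x‖ ^ 2 := by
  obtain ⟨N, hN, c, hbound⟩ := exists_pow_le_mul_norm_sq_of_eval_ne_zero hf.self_of_nhds hfx hpq
  refine ⟨N, hN, IsBigO.of_bound c ?_⟩
  filter_upwards [hf, eventually_eventually_nhds.2 hbound] with y hfy hy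
  have : (𝓝[{z | eval z q ≠ 0}] y).NeBot :=
    mem_closure_iff_nhdsWithin_neBot.1 (dense_setOf_eval_ne_zero_s8 hq y)
  have hev : ∀ᶠ z in 𝓝[{z | eval z q ≠ 0}] y, |f z| ^ N ≤ c * ‖z - x‖ ^ 2 :=
    eventually_nhdsWithin_iff.2 hy
  have hle : |f y| ^ N ≤ c * ‖y - x‖ ^ 2 :=
    le_of_tendsto_of_tendsto ((hfy.tendsto.mono_left nhdsWithin_le_nhds).abs.pow N)
      ((by fun_prop : Continuous fun z => c * ‖z - x‖ ^ 2).continuousAt.mono_left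
        nhdsWithin_le_nhds) hev
  simpa using hle

end LojasiewiczInequality

theorem regulous_power_differentiable_general {σ : Type*} [Finite σ] {f : (σ → ℝ) → ℝ}
    {x : σ → ℝ} (hf : ∀ᶠ y in 𝓝 x, ContinuousAt f y)
    (hrat : ∃ p q : MvPolynomial σ ℝ, q ≠ 0 ∧ ∀ᶠ y in 𝓝 x, eval y q * f y = eval y p)
    (hfx : f x = 0) :
    ∃ N : ℕ, 0 < N ∧ HasFDerivAt (fun y => f y ^ N) (0 : (σ → ℝ) →L[ℝ] ℝ) x := by
  cases nonempty_fintype σ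
  obtain ⟨p, q, hq, hpq⟩ := hrat
  obtain ⟨N, hN, hO⟩ := exists_pow_isBigO_norm_sub_sq hf hfx hq hpq
  exact ⟨N, hN, hO.hasFDerivAt one_lt_two⟩

/-- **Regulous functions, Corollaire `diff`**: if `f` is a regulous (continuous rational)
function on `ℝⁿ` vanishing at `x`, then some positive power `f^N` is (Fréchet)
differentiable at `x` with zero derivative. -/
theorem regulous_power_differentiable (n : ℕ) (f : (Fin n → ℝ) → ℝ)
    (hcont : Continuous f)
    (hrat : ∃ p q : MvPolynomial (Fin n) ℝ, q ≠ 0 ∧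
      ∀ y : Fin n → ℝ, eval y q * f y = eval y p)
    (x : Fin n → ℝ) (hx : f x = 0) :
    ∃ N : ℕ, 0 < N ∧
      HasFDerivAt (fun y : Fin n → ℝ => f y ^ N) (0 : (Fin n → ℝ) →L[ℝ] ℝ) x := by
  obtain ⟨p, q, hq, hpq⟩ := hrat
  exact regulous_power_differentiable_general (.of_forall fun _ => hcont.continuousAt)
    ⟨p, q, hq, .of_forall hpq⟩ hx
end

section
/- Let n, k be natural numbers and let f, g be k-regulous functions on ℝⁿ. Then f belongs to the radical of the principal ideal generated by g in R^k(ℝⁿ) if and only if Z(g) ⊆ Z(f). -/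
open MvPolynomial

/-- The ring `R^k(ℝⁿ)` of `k`-regulous functions, as a subring of the ring of all
functions `ℝⁿ → ℝ` with pointwise operations. -/
def regulousRing (n k : ℕ) : Subring ((Fin n → ℝ) → ℝ) where
  carrier := {f | IsRegulous n k f}
  one_mem' := ⟨contDiff_const, 1, 1, one_ne_zero, by simp⟩
  zero_mem' := ⟨contDiff_const, 0, 1, one_ne_zero, by simp⟩
  mul_mem' := by
    rintro f g ⟨hf, p₁, q₁, hq₁, h₁⟩ ⟨hg, p₂, q₂, hq₂, h₂⟩
    refine ⟨hf.mul hg, p₁ * p₂, q₁ * q₂, mul_ne_zero hq₁ hq₂, fun x => ?_⟩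
    simp only [eval_mul, Pi.mul_apply]
    linear_combination (eval x q₂ * g x) * h₁ x + eval x p₁ * h₂ x
  add_mem' := by
    rintro f g ⟨hf, p₁, q₁, hq₁, h₁⟩ ⟨hg, p₂, q₂, hq₂, h₂⟩
    refine ⟨hf.add hg, p₁ * q₂ + p₂ * q₁, q₁ * q₂, mul_ne_zero hq₁ hq₂, fun x => ?_⟩
    simp only [eval_mul, eval_add, Pi.add_apply]
    linear_combination (eval x q₂) * h₁ x + (eval x q₁) * h₂ x
  neg_mem' := by
    rintro f ⟨hf, p, q, hq, h⟩
    refine ⟨hf.neg, -p, q, hq, fun x => ?_⟩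
    simp only [map_neg, Pi.neg_apply]
    linear_combination -(h x)

/-! The point is a Łojasiewicz inequality: if `Z(g) ⊆ Z(f)`, then `f ^ M = O(g)` near every zero of
`g`, for some `M`. Once it is known, each differentiation of `f ^ N / g ^ j` costs a bounded number
of factors `f`, so `f ^ N / g` is of class `C^k` for `N` large and `f ^ N` is a multiple of `g`.

For the inequality, maximise `f ^ 2` over the compact set `e ≤ q ^ 2`, `g ^ 2 ≤ t`,
`∑ i, x i ^ 2 ≤ r`, where `q` is a common denominator of `f` and `g`. By Lagrange multipliers, a
maximum is a critical point of a map with rational components, and the critical values of such a map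
satisfy a nontrivial polynomial relation: a linear relation between Kähler differentials in
characteristic zero forces an algebraic one. So the maximal value `s` satisfies `R(-e, t, s, r) = 0`
for a fixed `R ≠ 0`. Dividing out powers of the first variables in turn and choosing `r` off the
zero set of the last coefficient gives `s ^ M = O(t)` as long as `e` is small compared with `t`.
-/

section Differentials

open KaehlerDifferential (D mapBaseChange)

theorem mapBaseChange_injective (R S T : Type*) [CommRing R] [CommRing S] [CommRing T]
    [Algebra R S] [Algebra S T] [Algebra R T] [IsScalarTower R S T] [Algebra.FormallySmooth S T] :
    Function.Injective (mapBaseChange R S T) := by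
  rw [injective_iff_map_eq_zero]
  intro ω hω
  obtain ⟨η, rfl⟩ := (Algebra.H1Cotangent.exact_δ_mapBaseChange R S T ω).mp hω
  rw [Subsingleton.elim η 0, map_zero]

variable {k K ι σ : Type*} [Field k] [Field K] [Algebra k K]

theorem formallySmooth_of_faithfulSMul [CharZero k] [Algebra.EssFiniteType k K] (B : Type*)
    [CommRing B] [IsDomain B] [Algebra k B] [Algebra B K] [IsScalarTower k B K] [FaithfulSMul B K] :
    Algebra.FormallySmooth B K := by
  let := FractionRing.liftAlgebra B K
  have : Algebra.EssFiniteType (FractionRing B) K := .of_comp k _ K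
  have : CharZero (FractionRing B) := charZero_of_injective_algebraMap (algebraMap k _).injective
  have : Algebra.FormallySmooth B (FractionRing B) := .of_isLocalization (nonZeroDivisors B)
  exact .comp B (FractionRing B) K

theorem linearIndependent_D_of_algebraicIndependent [CharZero k] [Algebra.EssFiniteType k K]
    {y : ι → K} (hy : AlgebraicIndependent k y) :
    LinearIndependent K fun i => D k K (y i) := by
  let : Algebra (MvPolynomial ι k) K := (aeval y).toAlgebra
  have : IsScalarTower k (MvPolynomial ι k) K := .of_algebraMap_eq' (aeval y).comp_algebraMap.symm
  have : FaithfulSMul (MvPolynomial ι k) K := (faithfulSMul_iff_algebraMap_injective _ K).2 hy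
  have : Algebra.FormallySmooth (MvPolynomial ι k) K := formallySmooth_of_faithfulSMul (k := k) _
  have hbasis := ((KaehlerDifferential.mvPolynomialBasis k ι).baseChange K).linearIndependent
  convert! hbasis.map' (mapBaseChange k (MvPolynomial ι k) K)
    (LinearMap.ker_eq_bot.2 (mapBaseChange_injective _ _ _)) with i
  have hX : algebraMap (MvPolynomial ι k) K (X i) = y i := aeval_X y i
  simp [hX]

theorem D_aeval [Fintype σ] (x : σ → K) (p : MvPolynomial σ k) :
    D k K (aeval x p) = ∑ j, aeval x (pderiv j p) • D k K (x j) := by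
  classical
  induction p using MvPolynomial.induction_on with
  | C a => simp [← MvPolynomial.algebraMap_eq]
  | add p q hp hq => simp [hp, hq, add_smul, Finset.sum_add_distrib]
  | mul_X p i hp =>
    have hX : ∑ j, aeval x (p * pderiv j (X i)) • D k K (x j) = aeval x p • D k K (x i) := by
      rw [Fintype.sum_eq_single i fun j hj => by simp [pderiv_X_of_ne hj.symm]]
      simp
    simp only [map_mul, aeval_X, Derivation.leibniz, hp, smul_eq_mul, map_add, add_smul,
      Finset.sum_add_distrib, Finset.smul_sum] at hX ⊢
    rw [hX]
    simp only [mul_smul]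

end Differentials

theorem exists_mem_submonoid_forall_prime_mem {A : Type*} [CommRing A] [IsNoetherianRing A]
    (I J : Ideal A) (M : Submonoid A)
    (h : ∀ P : Ideal A, P.IsPrime → I ≤ P → ¬J ≤ P → ∃ m ∈ M, m ∈ P) :
    ∃ m ∈ M, ∀ P : Ideal A, P.IsPrime → I ≤ P → ¬J ≤ P → m ∈ P := by
  have hfin : {P ∈ I.minimalPrimes | ¬J ≤ P}.Finite :=
    (Ideal.finite_minimalPrimes_of_isNoetherianRing A I).subset (Set.sep_subset _ _)
  choose! m hmM hmP using h
  refine ⟨∏ P ∈ hfin.toFinset, m P, prod_mem fun P hP => ?_, fun P hP hIP hJP => ?_⟩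
  · obtain ⟨⟨⟨hprime, hI⟩, -⟩, hJ⟩ := hfin.mem_toFinset.1 hP
    exact hmM P hprime hI hJ
  · obtain ⟨Q, hQ, hQP⟩ := Ideal.exists_minimalPrimes_le hIP
    have hJQ : ¬J ≤ Q := fun hJQ => hJP (hJQ.trans hQP)
    exact Ideal.mem_of_dvd P (Finset.dvd_prod_of_mem m (hfin.mem_toFinset.2 ⟨hQ, hJQ⟩))
      (hQP (hmP Q hQ.1.1 hQ.1.2 hJQ))

section Critical

open KaehlerDifferential (D)

variable {k K ι σ : Type*} [Field k] [Field K] [Algebra k K] [Fintype ι]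

/-- `x` is a critical point of the rational map with components `p i / q`, `y` is its value and `c`
are Lagrange multipliers. Stationarity is the relation `∑ i, c i * d(p i / q) = 0` multiplied by
`q`, which makes all conditions polynomial in `(x, y, c)`. -/
structure IsCriticalTuple (p : ι → MvPolynomial σ k) (q : MvPolynomial σ k)
    (x : σ → K) (y c : ι → K) : Prop where
  denom_ne_zero : aeval x q ≠ 0
  denom_mul : ∀ i, aeval x q * y i = aeval x (p i)
  multiplier_ne_zero : c ≠ 0
  stationary : ∀ j, ∑ i, c i * (aeval x (pderiv j (p i)) - y i * aeval x (pderiv j q)) = 0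

theorem IsCriticalTuple.not_algebraicIndependent [CharZero k] [Algebra.EssFiniteType k K]
    [Finite σ] {p : ι → MvPolynomial σ k} {q : MvPolynomial σ k} {x : σ → K} {y c : ι → K}
    (h : IsCriticalTuple p q x y c) : ¬AlgebraicIndependent k y := by
  have := Fintype.ofFinite σ
  intro hy
  have hdy (i : ι) : aeval x q • D k K (y i) =
      ∑ j, (aeval x (pderiv j (p i)) - y i * aeval x (pderiv j q)) • D k K (x j) := by
    have hleibniz := congrArg (D k K) (h.denom_mul i)
    rw [Derivation.leibniz, D_aeval, D_aeval] at hleibniz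
    simp only [sub_smul, Finset.sum_sub_distrib, mul_smul, ← Finset.smul_sum, ← hleibniz,
      add_sub_cancel_right]
  have hrel : ∑ i, c i • D k K (y i) = 0 := by
    refine (smul_eq_zero.1 ?_).resolve_left h.denom_ne_zero
    simp only [Finset.smul_sum, smul_comm (aeval x q), hdy, ← mul_smul]
    rw [Finset.sum_comm]
    simp only [← Finset.sum_smul, h.stationary, zero_smul, Finset.sum_const_zero]
  exact h.multiplier_ne_zero (funext (Fintype.linearIndependent_iff.1
    (linearIndependent_D_of_algebraicIndependent hy) c hrel))

/-- The ideal of the equations in `IsCriticalTuple`; the variables `x`, `y`, `c` are indexed by the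
summands of `σ ⊕ ι ⊕ ι` in this order. -/
noncomputable def criticalEquations (p : ι → MvPolynomial σ k) (q : MvPolynomial σ k) :
    Ideal (MvPolynomial (σ ⊕ ι ⊕ ι) k) :=
  .span (Set.range fun i => rename .inl q * X (.inr (.inl i)) - rename .inl (p i)) ⊔
  .span (Set.range fun j => ∑ i, X (.inr (.inr i)) *
    (rename .inl (pderiv j (p i)) - X (.inr (.inl i)) * rename .inl (pderiv j q)))

/-- The ideal of the products `q(x) * c i`, which vanish simultaneously exactly where one of the
conditions `q(x) ≠ 0` and `c ≠ 0` in `IsCriticalTuple` fails. -/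
noncomputable def criticalInequations (ι : Type*) (q : MvPolynomial σ k) :
    Ideal (MvPolynomial (σ ⊕ ι ⊕ ι) k) :=
  .span (Set.range fun i => rename .inl q * X (.inr (.inr i)))

theorem isCriticalTuple_iff_ker {p : ι → MvPolynomial σ k} {q : MvPolynomial σ k}
    {x : σ → K} {y c : ι → K} : IsCriticalTuple p q x y c ↔
      criticalEquations p q ≤ RingHom.ker (aeval (R := k) (Sum.elim x (Sum.elim y c))) ∧
      ¬criticalInequations ι q ≤ RingHom.ker (aeval (R := k) (Sum.elim x (Sum.elim y c))) := by
  have hx (P : MvPolynomial σ k) :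
      aeval (Sum.elim x (Sum.elim y c)) (rename .inl P) = aeval x P := by
    rw [aeval_rename, Sum.elim_comp_inl]
  simp only [criticalEquations, criticalInequations, sup_le_iff, Ideal.span_le,
    Set.range_subset_iff, SetLike.mem_coe, RingHom.mem_ker, map_sub, map_mul, map_sum, hx, aeval_X,
    Sum.elim_inl, Sum.elim_inr, sub_eq_zero, not_forall, mul_eq_zero, not_or]
  exact ⟨fun h => ⟨⟨h.denom_mul, h.stationary⟩,
      let ⟨i, hi⟩ := Function.ne_iff.1 h.multiplier_ne_zero
      ⟨i, h.denom_ne_zero, hi⟩⟩,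
    fun ⟨⟨hy, hc⟩, i, hq, hi⟩ => ⟨hq, hy, Function.ne_iff.2 ⟨i, hi⟩, hc⟩⟩

theorem exists_ne_zero_rename_mem_of_criticalEquations_le [CharZero k] [Finite σ]
    {p : ι → MvPolynomial σ k} {q : MvPolynomial σ k} {P : Ideal (MvPolynomial (σ ⊕ ι ⊕ ι) k)}
    [P.IsPrime] (hI : criticalEquations p q ≤ P) (hJ : ¬criticalInequations ι q ≤ P) :
    ∃ R : MvPolynomial ι k, R ≠ 0 ∧ rename (.inr ∘ .inl) R ∈ P := by
  have : Algebra.EssFiniteType k P.ResidueField := .comp k (MvPolynomial (σ ⊕ ι ⊕ ι) k) _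
  let z : σ ⊕ ι ⊕ ι → P.ResidueField := fun i => algebraMap _ _ (X i : MvPolynomial (σ ⊕ ι ⊕ ι) k)
  have haeval : aeval z = IsScalarTower.toAlgHom k (MvPolynomial (σ ⊕ ι ⊕ ι) k) P.ResidueField :=
    algHom_ext fun i => aeval_X z i
  have hker : RingHom.ker (aeval (R := k) z) = P := by
    rw [haeval]
    exact Ideal.ker_algebraMap_residueField P
  have hz : z = Sum.elim (z ∘ .inl) (Sum.elim (z ∘ .inr ∘ .inl) (z ∘ .inr ∘ .inr)) := by
    ext (i | i | i) <;> rfl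
  rw [← hker, hz] at hI hJ
  have hdep := (isCriticalTuple_iff_ker.2 ⟨hI, hJ⟩).not_algebraicIndependent
  rw [algebraicIndependent_iff] at hdep
  push Not at hdep
  obtain ⟨R, hR, hR0⟩ := hdep
  refine ⟨R, hR0, ?_⟩
  rwa [← hker, RingHom.mem_ker, aeval_rename]

theorem exists_ne_zero_eval_eq_zero_of_isCriticalTuple [CharZero k] [Finite σ]
    (p : ι → MvPolynomial σ k) (q : MvPolynomial σ k) :
    ∃ R : MvPolynomial ι k, R ≠ 0 ∧
      ∀ (x : σ → k) (y c : ι → k), IsCriticalTuple p q x y c → eval y R = 0 := by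
  have hprime (P : Ideal (MvPolynomial (σ ⊕ ι ⊕ ι) k)) (_ : P.IsPrime)
      (hI : criticalEquations p q ≤ P) (hJ : ¬criticalInequations ι q ≤ P) :
      ∃ m ∈ (nonZeroDivisors (MvPolynomial ι k)).map (rename (R := k) (.inr ∘ .inl)), m ∈ P := by
    obtain ⟨R, hR, hRP⟩ := exists_ne_zero_rename_mem_of_criticalEquations_le hI hJ
    exact ⟨_, ⟨R, mem_nonZeroDivisors_of_ne_zero hR, rfl⟩, hRP⟩
  obtain ⟨_, ⟨R, hR, rfl⟩, hvanish⟩ := exists_mem_submonoid_forall_prime_mem _ _ _ hprime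
  refine ⟨R, nonZeroDivisors.ne_zero hR, fun x y c hcrit => ?_⟩
  obtain ⟨hI, hJ⟩ := isCriticalTuple_iff_ker.1 hcrit
  have hmem : aeval (Sum.elim x (Sum.elim y c)) (rename (.inr ∘ .inl) R) = 0 :=
    hvanish _ (RingHom.ker_isPrime _) hI hJ
  rwa [aeval_rename, ← Function.comp_assoc, Sum.elim_comp_inr, Sum.elim_comp_inl,
    aeval_eq_eval] at hmem

end Critical

section Extrema

variable {σ ι : Type*}

theorem hasStrictFDerivAt_eval [Fintype σ] (p : MvPolynomial σ ℝ) (x : σ → ℝ) :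
    HasStrictFDerivAt (fun z => eval z p)
      (∑ j, eval x (pderiv j p) • (ContinuousLinearMap.proj j : (σ → ℝ) →L[ℝ] ℝ)) x := by
  classical
  induction p using MvPolynomial.induction_on with
  | C a => simpa using hasStrictFDerivAt_const a x
  | add p q hp hq =>
    simp only [map_add]
    exact (hp.add hq).congr_fderiv (by simp [add_smul, Finset.sum_add_distrib])
  | mul_X p i hp =>
    simp only [map_mul, eval_X]
    refine (hp.mul (hasStrictFDerivAt_apply i x)).congr_fderiv ?_
    have hX : ∑ j, eval x (pderiv j (X i)) • (ContinuousLinearMap.proj j : (σ → ℝ) →L[ℝ] ℝ) =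
        .proj i := by
      rw [Fintype.sum_eq_single i fun j hj => by simp [pderiv_X_of_ne hj.symm]]
      simp
    simp only [Derivation.leibniz, smul_eq_mul, map_add, map_mul, add_smul, mul_smul, eval_X,
      Finset.sum_add_distrib, ← Finset.smul_sum, hX]

theorem isLocalExtrOn_mul_sub {E : Type*} [TopologicalSpace E] {q u : E → ℝ} {s : Set E} {x : E}
    (hq : ContinuousAt q x) (hx : q x ≠ 0) (hmax : IsLocalMaxOn u s x) :
    IsLocalExtrOn (fun z => q z * (u z - u x)) s x := by
  rcases hx.lt_or_gt with hneg | hpos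
  · refine .inl ?_
    filter_upwards [hmax, nhdsWithin_le_nhds (hq.eventually_lt_const hneg)] with z hz hqz
    simpa using mul_nonneg_of_nonpos_of_nonpos hqz.le (sub_nonpos.2 hz)
  · refine .inr ?_
    filter_upwards [hmax, nhdsWithin_le_nhds (hq.eventually_const_lt hpos)] with z hz hqz
    simpa using mul_nonpos_of_nonneg_of_nonpos hqz.le (sub_nonpos.2 hz)

variable {F : ι → (σ → ℝ) → ℝ} {p : ι → MvPolynomial σ ℝ} {q : MvPolynomial σ ℝ}

theorem exists_isCriticalTuple_of_isLocalMaxOn [Finite σ] [Fintype ι]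
    (hF : ∀ i z, eval z q * F i z = eval z (p i)) (o : ι) {x : σ → ℝ} (hx : eval x q ≠ 0)
    (hmax : IsLocalMaxOn (F o) {z | ∀ i ≠ o, F i z = F i x} x) :
    ∃ c, IsCriticalTuple p q x (fun i => F i x) c := by
  classical
  have := Fintype.ofFinite σ
  let P (i : ι) : MvPolynomial σ ℝ := p i - C (F i x) * q
  have hP (i : ι) (z : σ → ℝ) : eval z (P i) = eval z q * (F i z - F i x) := by
    simp only [P, map_sub, map_mul, eval_C, ← hF]
    ring
  have hlevel : IsLocalMaxOn (F o) {z | ∀ i : {i // i ≠ o}, eval z (P i) = eval x (P i)} x := by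
    refine eventually_nhdsWithin_iff.2 ?_
    filter_upwards [(continuous_eval q).continuousAt.eventually_ne hx,
      eventually_nhdsWithin_iff.1 hmax] with z hqz hz hlev
    refine hz fun i hi => ?_
    simpa [hP, hqz, sub_eq_zero] using hlev ⟨i, hi⟩
  have hextr := isLocalExtrOn_mul_sub (continuous_eval q).continuousAt hx hlevel
  simp only [← hP] at hextr
  have hdep := hextr.linear_dependent_of_hasStrictFDerivAt
    (fun i => hasStrictFDerivAt_eval (P i) x) (hasStrictFDerivAt_eval (P o) x)
  let D (i : ι) : StrongDual ℝ (σ → ℝ) := ∑ j, eval x (pderiv j (P i)) • .proj j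
  have hD : Option.elim' (D o) (fun i : {i // i ≠ o} => D i) = D ∘ Equiv.optionSubtypeNe o := by
    ext (_ | i) <;> simp
  change ¬LinearIndependent ℝ (Option.elim' (D o) fun i : {i // i ≠ o} => D i) at hdep
  rw [hD, linearIndependent_equiv, Fintype.not_linearIndependent_iff] at hdep
  obtain ⟨c, hc, i, hi⟩ := hdep
  refine ⟨c, hx, fun i => hF i x, Function.ne_iff.2 ⟨i, hi⟩, fun j => ?_⟩
  simpa [D, P, Pi.single_apply] using DFunLike.congr_fun hc (Pi.single j 1)

theorem exists_ne_zero_eval_eq_zero_of_isLocalMaxOn [Finite σ] [Finite ι]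
    (hF : ∀ i z, eval z q * F i z = eval z (p i)) (o : ι) :
    ∃ R : MvPolynomial ι ℝ, R ≠ 0 ∧ ∀ x, eval x q ≠ 0 →
      IsLocalMaxOn (F o) {z | ∀ i ≠ o, F i z = F i x} x → eval (fun i => F i x) R = 0 := by
  have := Fintype.ofFinite ι
  obtain ⟨R, hR, hvanish⟩ := exists_ne_zero_eval_eq_zero_of_isCriticalTuple p q
  refine ⟨R, hR, fun x hx hmax => ?_⟩
  obtain ⟨c, hc⟩ := exists_isCriticalTuple_of_isLocalMaxOn hF o hx hmax
  exact hvanish x _ c hc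

theorem exists_ne_zero_eval_eq_zero_of_isMaxOn [Finite σ] [Finite ι]
    (hF : ∀ i z, eval z q * F i z = eval z (p i)) (o : ι) :
    ∃ R : MvPolynomial ι ℝ, R ≠ 0 ∧ ∀ (w : ι → ℝ) (x : σ → ℝ), eval x q ≠ 0 → F o x = w o →
      (∀ i ≠ o, F i x ≤ w i) → IsMaxOn (F o) {z | ∀ i ≠ o, F i z ≤ w i} x → eval w R = 0 := by
  classical
  -- A squared slack variable for each `i ≠ o` turns the inequality constraints into equalities.
  let slack (i : ι) : MvPolynomial (σ ⊕ ι) ℝ := if i = o then 0 else X (.inr i) ^ 2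
  have hslack (i : ι) (z : σ ⊕ ι → ℝ) :
      eval z (slack i) = if i = o then 0 else z (.inr i) ^ 2 := by
    split_ifs with h <;> simp [slack, h]
  have hG (i : ι) (z : σ ⊕ ι → ℝ) : eval z (rename .inl q) * (F i (z ∘ .inl) + eval z (slack i)) =
      eval z (rename .inl (p i) + rename .inl q * slack i) := by
    simp only [map_add, map_mul, eval_rename, ← hF]
    ring
  obtain ⟨R, hR, hvanish⟩ := exists_ne_zero_eval_eq_zero_of_isLocalMaxOn hG o
  refine ⟨R, hR, fun w x hx ho hle hmax => ?_⟩
  let z : σ ⊕ ι → ℝ := Sum.elim x fun i => √(w i - F i x)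
  have hz (i : ι) : F i (z ∘ .inl) + eval z (slack i) = w i := by
    by_cases hi : i = o
    · simp [z, hslack, hi, ho]
    · simp [z, hslack, hi, Real.sq_sqrt (sub_nonneg.2 (hle i hi))]
  have hzmax := hvanish z (by simpa [z, eval_rename] using hx) ?_
  · simpa only [hz] using hzmax
  · refine Filter.eventually_of_mem self_mem_nhdsWithin fun z' hz' => ?_
    simp only [hslack, if_true, add_zero]
    have hfeasible (i : ι) (hi : i ≠ o) : F i (z' ∘ .inl) ≤ w i := by
      have hi' := hz' i hi
      rw [hz, hslack, if_neg hi] at hi'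
      linarith [sq_nonneg (z' (.inr i))]
    exact hmax hfeasible

end Extrema

section Elimination

open scoped Topology

theorem exists_eval_cons_eq_pow_mul {A : Type*} [CommRing A] [IsDomain A] {m : ℕ}
    {R : MvPolynomial (Fin (m + 1)) A} (hR : R ≠ 0) :
    ∃ (d : ℕ) (S : MvPolynomial (Fin m) A) (T : MvPolynomial (Fin (m + 1)) A), S ≠ 0 ∧
      ∀ e y, eval (Fin.cons e y) R = e ^ d * (eval y S + e * eval (Fin.cons e y) T) := by
  obtain ⟨P, hP, hdvd⟩ := (finSuccEquiv A m R).exists_eq_pow_rootMultiplicity_mul_and_not_dvd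
    ((map_ne_zero_iff _ (finSuccEquiv A m).injective).2 hR) 0
  rw [map_zero, sub_zero] at hP hdvd
  generalize (finSuccEquiv A m R).rootMultiplicity 0 = d at hP
  refine ⟨d, P.coeff 0, (finSuccEquiv A m).symm P.divX, mt Polynomial.X_dvd_iff.2 hdvd,
    fun e y => ?_⟩
  have hsplit := congrArg (fun Q => Polynomial.eval e (Q.map (eval y))) P.divX_mul_X_add
  rw [eval_eq_eval_mv_eval', eval_eq_eval_mv_eval', hP, AlgEquiv.apply_symm_apply]
  simp only [Polynomial.map_mul, Polynomial.map_pow, Polynomial.map_X, Polynomial.map_add,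
    Polynomial.map_C, Polynomial.eval_mul, Polynomial.eval_pow, Polynomial.eval_X,
    Polynomial.eval_add, Polynomial.eval_C] at hsplit ⊢
  rw [← hsplit]
  ring

theorem abs_pow_mul_abs_le {e t s u τ₁ τ₂ : ℝ} {l M : ℕ} (ht : 0 < t) (het : |e| ≤ t ^ (l + 1))
    (hzero : t ^ l * (s ^ M * u + t * τ₂) + e * τ₁ = 0) :
    |s| ^ M * |u| ≤ (|τ₂| + |τ₁|) * t := by
  have hbound : |s ^ M * u + t * τ₂| ≤ t * |τ₁| := by
    refine le_of_mul_le_mul_left ?_ (pow_pos ht l)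
    calc t ^ l * |s ^ M * u + t * τ₂| = |e| * |τ₁| := by
          rw [← abs_of_pos (pow_pos ht l), ← abs_mul, eq_neg_of_add_eq_zero_left hzero, abs_neg,
            abs_mul]
      _ ≤ t ^ (l + 1) * |τ₁| := by gcongr
      _ = t ^ l * (t * |τ₁|) := by ring
  calc |s| ^ M * |u| = |(s ^ M * u + t * τ₂) - t * τ₂| := by
        rw [add_sub_cancel_right, abs_mul, abs_pow]
    _ ≤ t * |τ₁| + t * |τ₂| := by grw [abs_sub, hbound, abs_mul t, abs_of_pos ht]
    _ = (|τ₂| + |τ₁|) * t := by ring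

theorem exists_pow_le_mul_of_eval_cons_eq_zero {m : ℕ} {R : MvPolynomial (Fin (m + 3)) ℝ}
    (hR : R ≠ 0) : ∃ (l M : ℕ) (U : MvPolynomial (Fin m) ℝ), U ≠ 0 ∧ ∀ y, eval y U ≠ 0 →
      ∃ B, ∀ᶠ v : ℝ × ℝ × ℝ in 𝓝 0, v.1 ≠ 0 → 0 < v.2.1 → |v.1| ≤ v.2.1 ^ (l + 1) →
        eval (Fin.cons v.1 (Fin.cons v.2.1 (Fin.cons v.2.2 y))) R = 0 →
        |v.2.2| ^ M ≤ B * v.2.1 := by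
  obtain ⟨j, S₁, T₁, hS₁, hR⟩ := exists_eval_cons_eq_pow_mul hR
  obtain ⟨l, S₂, T₂, hS₂, hRS₁⟩ := exists_eval_cons_eq_pow_mul hS₁
  obtain ⟨M, U, T₃, hU, hRS₂⟩ := exists_eval_cons_eq_pow_mul hS₂
  refine ⟨l, M, U, hU, fun y hy => ?_⟩
  let b (v : ℝ × ℝ × ℝ) : ℝ := |eval (Fin.cons v.2.1 (Fin.cons v.2.2 y) : Fin (m + 2) → ℝ) T₂| +
    |eval (Fin.cons v.1 (Fin.cons v.2.1 (Fin.cons v.2.2 y)) : Fin (m + 3) → ℝ) T₁|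
  let u (v : ℝ × ℝ × ℝ) : ℝ :=
    eval y U + v.2.2 * eval (Fin.cons v.2.2 y : Fin (m + 1) → ℝ) T₃
  have hb : Continuous b := by
    have := continuous_eval T₁
    have := continuous_eval T₂
    fun_prop
  have hu : Continuous u := by
    have := continuous_eval T₃
    fun_prop
  have hu0 : |eval y U| / 2 < |u 0| := by
    simpa [u] using half_lt_self (abs_pos.2 hy)
  refine ⟨(b 0 + 1) / (|eval y U| / 2), ?_⟩
  filter_upwards [hu.abs.continuousAt.eventually_const_lt hu0,
    hb.continuousAt.eventually_lt_const (lt_add_one _)] with ⟨e, t, s⟩ huv hbv he ht het hzero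
  rw [hR, hRS₁, hRS₂, mul_eq_zero, or_iff_right (pow_ne_zero j he)] at hzero
  set τ₁ := eval (Fin.cons e (Fin.cons t (Fin.cons s y)) : Fin (m + 3) → ℝ) T₁
  set τ₂ := eval (Fin.cons t (Fin.cons s y) : Fin (m + 2) → ℝ) T₂
  change t ^ l * (s ^ M * u (e, t, s) + t * τ₂) + e * τ₁ = 0 at hzero
  have hsu : |s| ^ M * |u (e, t, s)| ≤ (b 0 + 1) * t :=
    (abs_pow_mul_abs_le ht het hzero).trans (by gcongr)
  rw [div_mul_eq_mul_div, le_div_iff₀ (half_pos (abs_pos.2 hy))]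
  exact le_trans (by gcongr) hsu

end Elimination

section Lojasiewicz

open scoped Topology

theorem eventually_le_of_dense {E α : Type*} [TopologicalSpace E] [TopologicalSpace α]
    [Preorder α] [OrderClosedTopology α] {s : Set E} (hs : Dense s) {u v : E → α}
    (hu : Continuous u) (hv : Continuous v) {a : E} (h : ∀ᶠ x in 𝓝 a, x ∈ s → u x ≤ v x) :
    ∀ᶠ x in 𝓝 a, u x ≤ v x := by
  obtain ⟨V, hV, hVo, haV⟩ := eventually_nhds_iff.1 h
  filter_upwards [hVo.mem_nhds haV] with x hx
  refine closure_minimal (fun z hz => ?_) (isClosed_le hu hv) (hs.open_subset_closure_inter hVo hx)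
  exact hV z hz.1 hz.2

variable {σ : Type*}

theorem dense_eval_ne_zero [Finite σ] {q : MvPolynomial σ ℝ} (hq : q ≠ 0) :
    Dense {x : σ → ℝ | eval x q ≠ 0} := by
  have := Fintype.ofFinite σ
  refine interior_eq_empty_iff_dense_compl.1 (Set.eq_empty_of_forall_notMem fun a ha => hq ?_)
  refine MvPolynomial.funext fun x => ?_
  exact congrFun ((AnalyticOnNhd.eval_mvPolynomial q).eq_of_eventuallyEq
    (analyticOnNhd_const (v := eval x 0)) (mem_interior_iff_mem_nhds.1 ha)) x

theorem isCompact_setOf_eval_sum_sq_le [Fintype σ] (r : ℝ) :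
    IsCompact {x : σ → ℝ | eval x (∑ i, X i ^ 2) ≤ r} := by
  refine (isCompact_univ_pi fun _ => isCompact_Icc (a := -√r) (b := √r)).of_isClosed_subset
    (isClosed_le (continuous_eval _) continuous_const) fun x hx i _ => ?_
  refine abs_le.1 (Real.abs_le_sqrt ((Finset.single_le_sum (fun j _ => sq_nonneg (x j))
    (Finset.mem_univ i)).trans (?_ : _ ≤ r)))
  simpa using hx

theorem exists_forall_abs_lt_imp_abs_lt {E : Type*} [TopologicalSpace E] {K : Set E}
    (hK : IsCompact K) {f g : E → ℝ} (hf : Continuous f) (hg : Continuous g)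
    (hfg : ∀ x ∈ K, g x = 0 → f x = 0) {η : ℝ} (hη : 0 < η) :
    ∃ τ > 0, ∀ x ∈ K, |g x| < τ → |f x| < η := by
  have hKη : IsCompact (K ∩ {x | η ≤ |f x|}) :=
    hK.inter_right (isClosed_le continuous_const hf.abs)
  obtain ⟨τ, hτ, hτK⟩ := hKη.exists_forall_le' hg.abs.continuousOn (a := 0) fun x hx =>
    abs_pos.2 fun hgx => hη.not_ge (by simpa [hfg x hx.1 hgx] using hx.2)
  exact ⟨τ, hτ, fun x hx hgx => not_le.1 fun hfx => hgx.not_ge (hτK x ⟨hx, hfx⟩)⟩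

/-- The compact set over which `f ^ 2` is maximised for the Łojasiewicz inequality. The constraint
`e ≤ q ^ 2`, with `0 < e`, keeps it away from the zeros of the denominator `q`. -/
def sublevelRegion [Fintype σ] (q : MvPolynomial σ ℝ) (g : (σ → ℝ) → ℝ) (e t r : ℝ) :
    Set (σ → ℝ) :=
  {x | e ≤ eval x q ^ 2 ∧ g x ^ 2 ≤ t ∧ eval x (∑ i, X i ^ 2) ≤ r}

variable {f g : (σ → ℝ) → ℝ} {p₁ p₂ q : MvPolynomial σ ℝ}

theorem isCompact_sublevelRegion [Fintype σ] (q : MvPolynomial σ ℝ) (hg : Continuous g)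
    (e t r : ℝ) : IsCompact (sublevelRegion q g e t r) :=
  (isCompact_setOf_eval_sum_sq_le r).of_isClosed_subset
    ((isClosed_le continuous_const ((continuous_eval q).pow 2)).inter
      ((isClosed_le (hg.pow 2) continuous_const).inter
        (isClosed_le (continuous_eval _) continuous_const))) fun _ hx => hx.2.2

theorem exists_eval_eq_zero_of_isMaxOn_sublevelRegion [Fintype σ]
    (hf : ∀ x, eval x q * f x = eval x p₁) (hg : ∀ x, eval x q * g x = eval x p₂) :
    ∃ R : MvPolynomial (Fin 4) ℝ, R ≠ 0 ∧ ∀ (e t r : ℝ) (x : σ → ℝ), 0 < e →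
      x ∈ sublevelRegion q g e t r → IsMaxOn (fun z => f z ^ 2) (sublevelRegion q g e t r) x →
      eval ![-e, t, f x ^ 2, r] R = 0 := by
  let F : Fin 4 → (σ → ℝ) → ℝ :=
    ![fun x => -eval x q ^ 2, fun x => g x ^ 2, fun x => f x ^ 2, fun x => eval x (∑ i, X i ^ 2)]
  have hF (i : Fin 4) (x : σ → ℝ) : eval x (q ^ 2) * F i x =
      eval x ((![-q ^ 2 * q ^ 2, p₂ ^ 2, p₁ ^ 2, q ^ 2 * ∑ i, X i ^ 2] : Fin 4 → _) i) := by
    fin_cases i <;> simp [F, ← hf, ← hg, mul_pow]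
  obtain ⟨R, hR, hvanish⟩ := exists_ne_zero_eval_eq_zero_of_isMaxOn hF 2
  refine ⟨R, hR, fun e t r x he hx hmax => ?_⟩
  have hregion : {z | ∀ i ≠ 2, F i z ≤ ![-e, t, f x ^ 2, r] i} = sublevelRegion q g e t r := by
    ext z
    simp [F, sublevelRegion, Fin.forall_fin_succ]
  refine hvanish _ x ?_ rfl ?_ ?_
  · rw [map_pow]
    exact (he.trans_le hx.1).ne'
  · exact hregion.ge hx
  · rwa [hregion]

theorem exists_pow_le_mul_of_isMaxOn_sublevelRegion [Fintype σ]
    (hf : ∀ x, eval x q * f x = eval x p₁) (hg : ∀ x, eval x q * g x = eval x p₂) :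
    ∃ l M : ℕ, ∀ s, ∃ r > s, ∃ B, ∃ δ > 0, ∀ e t x, 0 < e → e ≤ t ^ (l + 1) → 0 < t → t < δ →
      x ∈ sublevelRegion q g e t r → IsMaxOn (fun z => f z ^ 2) (sublevelRegion q g e t r) x →
      f x ^ 2 < δ → (f x ^ 2) ^ M ≤ B * t := by
  obtain ⟨R, hR, hvanish⟩ := exists_eval_eq_zero_of_isMaxOn_sublevelRegion hf hg
  obtain ⟨l, M, U, hU, hbound⟩ := exists_pow_le_mul_of_eval_cons_eq_zero (m := 1) hR
  refine ⟨l, M, fun s => ?_⟩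
  obtain ⟨y, hys, hyU⟩ := (dense_eval_ne_zero hU).inter_open_nonempty {y | s < y 0}
    (isOpen_lt continuous_const (continuous_apply 0)) ⟨fun _ => s + 1, by simp⟩
  obtain ⟨B, hB⟩ := hbound y hyU
  obtain ⟨η, hη, hB⟩ := Metric.eventually_nhds_iff.1 hB
  refine ⟨y 0, hys, B, min η 1, by positivity, fun e t x he het ht htδ hx hmax hfx => ?_⟩
  obtain ⟨htη, ht1⟩ := lt_min_iff.1 htδ
  have heη : e < η :=
    (het.trans (pow_le_of_le_one ht.le ht1.le l.succ_ne_zero)).trans_lt htη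
  have hdist : dist (-e, t, f x ^ 2) 0 < η := by
    simpa [Prod.norm_def, abs_of_pos, he, ht, heη, htη] using hfx.trans_le (min_le_left _ _)
  have hy : ![-e, t, f x ^ 2, y 0] = Fin.cons (-e) (Fin.cons t (Fin.cons (f x ^ 2) y)) := by
    ext i
    fin_cases i <;> rfl
  simpa using hB hdist (neg_ne_zero.2 he.ne') ht (by simpa [abs_of_pos he])
    (hy ▸ hvanish e t (y 0) x he hx hmax)

theorem exists_pow_le_mul_of_zeros_subset [Finite σ] (hfc : Continuous f) (hgc : Continuous g)
    (hf : ∀ x, eval x q * f x = eval x p₁) (hg : ∀ x, eval x q * g x = eval x p₂)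
    (hfg : ∀ x, g x = 0 → f x = 0) :
    ∃ M : ℕ, ∀ a, g a = 0 → ∃ B, ∀ᶠ x in 𝓝 a, eval x q ≠ 0 → g x ≠ 0 →
      (f x ^ 2) ^ M ≤ B * g x ^ 2 := by
  have := Fintype.ofFinite σ
  obtain ⟨l, M, hbound⟩ := exists_pow_le_mul_of_isMaxOn_sublevelRegion hf hg
  refine ⟨M, fun a ha => ?_⟩
  have hf2 : Continuous fun x => f x ^ 2 := hfc.pow 2
  have hg2 : Continuous fun x => g x ^ 2 := hgc.pow 2
  obtain ⟨r, hr, B, δ, hδ, hB⟩ := hbound (eval a (∑ i, X i ^ 2))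
  obtain ⟨τ, hτ, hsmall⟩ := exists_forall_abs_lt_imp_abs_lt (isCompact_setOf_eval_sum_sq_le r)
    hf2 hg2 (fun x _ => by simpa using hfg x) hδ
  have hga : g a ^ 2 < min δ τ := by simp [ha, hδ, hτ]
  refine ⟨B, ?_⟩
  filter_upwards [hg2.continuousAt.eventually_lt_const hga,
    (continuous_eval _).continuousAt.eventually_lt_const hr] with x hgδ hxr hqx hgx
  obtain ⟨hgδ, hgτ⟩ := lt_min_iff.1 hgδ
  -- This `e` keeps `x` in the region while being small against `g x ^ 2`.
  let e := min (eval x q ^ 2) ((g x ^ 2) ^ (l + 1))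
  have hx : x ∈ sublevelRegion q g e (g x ^ 2) r := ⟨min_le_left _ _, le_rfl, hxr.le⟩
  obtain ⟨z, hz, hmax⟩ := (isCompact_sublevelRegion q hgc e (g x ^ 2) r).exists_isMaxOn ⟨x, hx⟩
    hf2.continuousOn
  have hfz : f z ^ 2 < δ := by
    simpa using hsmall z hz.2.2 (by simpa using hz.2.1.trans_lt hgτ)
  calc (f x ^ 2) ^ M ≤ (f z ^ 2) ^ M := pow_le_pow_left₀ (sq_nonneg _) (hmax hx) M
    _ ≤ B * g x ^ 2 := hB e _ z (by positivity) (min_le_right _ _) (by positivity) hgδ hz hmax hfz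

theorem exists_pow_isBigO_of_zeros_subset [Finite σ] (hfc : Continuous f) (hgc : Continuous g)
    (hf : ∀ x, eval x q * f x = eval x p₁) (hg : ∀ x, eval x q * g x = eval x p₂)
    (hq : q ≠ 0) (hp₂ : p₂ ≠ 0) (hfg : ∀ x, g x = 0 → f x = 0) :
    ∃ M : ℕ, ∀ a, g a = 0 → (fun x => f x ^ M) =O[𝓝 a] g := by
  obtain ⟨M, hM⟩ := exists_pow_le_mul_of_zeros_subset hfc hgc hf hg hfg
  refine ⟨M, fun a ha => ?_⟩
  obtain ⟨B, hB⟩ := hM a ha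
  refine Asymptotics.IsBigO.of_pow two_ne_zero (.of_bound B ?_)
  have hle := eventually_le_of_dense (dense_eval_ne_zero (mul_ne_zero hq hp₂))
    (u := fun x => (f x ^ 2) ^ M) (v := fun x => B * g x ^ 2) (by fun_prop) (by fun_prop)
    (hB.mono fun x hx hne => ?_)
  · filter_upwards [hle] with x hx
    rw [pow_right_comm] at hx
    simpa only [Pi.pow_apply, Real.norm_of_nonneg (sq_nonneg _)] using hx
  · rw [Set.mem_ofPred, map_mul, mul_ne_zero_iff, ← hg, mul_ne_zero_iff] at hne
    exact hx hne.1 hne.2.2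

end Lojasiewicz

section Flatness

open Asymptotics
open scoped Topology

variable {𝕜 : Type*} [NontriviallyNormedField 𝕜]

theorem isBigO_pow_div_pow {α : Type*} {l : Filter α} {f g : α → 𝕜} {M : ℕ}
    (hfg : (fun x => f x ^ M) =O[l] g) (s j : ℕ) :
    (fun x => f x ^ (s + M * j) / g x ^ j) =O[l] fun x => f x ^ s := by
  have hcancel : (fun x => g x ^ j * (g x ^ j)⁻¹) =O[l] fun _ => (1 : 𝕜) :=
    .of_bound 1 (.of_forall fun x => by rcases eq_or_ne (g x ^ j) 0 with h | h <;> simp [h])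
  have hprod := ((isBigO_refl (fun x => f x ^ s) l).mul
    ((hfg.pow j).mul (isBigO_refl (fun x => (g x ^ j)⁻¹) l))).trans
    ((isBigO_refl (fun x => f x ^ s) l).mul hcancel)
  simp only [mul_one] at hprod
  refine hprod.congr_left fun x => ?_
  rw [pow_add, pow_mul, div_eq_mul_inv, mul_assoc]

theorem eq_zero_of_pow_isBigO {X : Type*} [TopologicalSpace X] {f g : X → 𝕜} {M : ℕ} {a : X}
    (hfg : (fun x => f x ^ M) =O[𝓝 a] g) (ha : g a = 0) : f a = 0 := by
  obtain ⟨C, hC⟩ := hfg.bound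
  have hpow : f a ^ M = 0 := by
    simpa only [ha, norm_zero, mul_zero, norm_le_zero_iff] using hC.self_of_nhds
  exact eq_zero_of_pow_eq_zero hpow

-- At a zero of `g` the convention `x / 0 = 0` gives the quotient its limiting value.
theorem continuous_pow_div_pow {X : Type*} [TopologicalSpace X] {f g : X → 𝕜} {M : ℕ}
    (hf : Continuous f) (hg : Continuous g) (hfg : ∀ a, g a = 0 → (fun x => f x ^ M) =O[𝓝 a] g)
    {s : ℕ} (hs : s ≠ 0) (j : ℕ) :
    Continuous fun x => f x ^ (s + M * j) / g x ^ j := by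
  refine continuous_iff_continuousAt.2 fun a => ?_
  by_cases ha : g a = 0
  · have hfa := eq_zero_of_pow_isBigO (hfg a ha) ha
    have hlim : Filter.Tendsto (fun x => f x ^ s) (𝓝 a) (𝓝 0) :=
      (hf.pow s).tendsto' a 0 (by simp [hfa, hs])
    simpa [ContinuousAt, hfa, hs] using (isBigO_pow_div_pow (hfg a ha) s j).trans_tendsto hlim
  · exact (hf.pow _).continuousAt.div (hg.pow j).continuousAt (pow_ne_zero j ha)

variable {E : Type*} [NormedAddCommGroup E] [NormedSpace 𝕜 E] {f g : E → 𝕜}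
  {f' g' : StrongDual 𝕜 E} {M : ℕ} {a : E}

theorem hasFDerivAt_pow_succ_div_pow (hf : HasFDerivAt f f' a) (hg : HasFDerivAt g g' a)
    (ha : g a ≠ 0) (N j : ℕ) :
    HasFDerivAt (fun x => f x ^ (N + 1) / g x ^ j)
      ((f a ^ N / g a ^ (j + 1)) • (((N + 1) * g a) • f' - (j * f a) • g')) a := by
  have hinv : HasFDerivAt (fun x => (g x ^ j)⁻¹) _ a :=
    (hasDerivAt_inv (pow_ne_zero j ha)).comp_hasFDerivAt a (hg.pow j)
  simp only [div_eq_mul_inv]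
  refine ((hf.pow (N + 1)).mul hinv).congr_fderiv ?_
  ext v
  rcases j with _ | j
  · simp only [pow_zero, one_pow, inv_one, zero_tsub, add_tsub_cancel_right,
      nsmul_eq_mul, Nat.cast_add, Nat.cast_one, one_smul, add_apply, smul_apply, smul_eq_mul,
      zero_mul, mul_zero, zero_add, pow_one, Nat.cast_zero, sub_apply, sub_zero]
    field_simp
  · simp only [add_tsub_cancel_right, nsmul_eq_mul, Nat.cast_add, Nat.cast_one, add_apply,
      smul_apply, smul_eq_mul, neg_mul, mul_neg, sub_apply]
    field_simp
    ring

theorem hasFDerivAt_zero_pow_div_pow (hfg : (fun x => f x ^ M) =O[𝓝 a] g) (ha : g a = 0)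
    (hf : DifferentiableAt 𝕜 f a) {s : ℕ} (hs : 1 < s) (j : ℕ) :
    HasFDerivAt (fun x => f x ^ (s + M * j) / g x ^ j) (0 : StrongDual 𝕜 E) a := by
  have hlin : f =O[𝓝 a] fun x => ‖x - a‖ := by
    simpa [eq_zero_of_pow_isBigO hfg ha] using hf.isBigO_sub.norm_right
  exact ((isBigO_pow_div_pow hfg s j).trans (hlin.pow s)).hasFDerivAt hs

-- Differentiation trades `(s, j)` for `(s - (M + 1), j + 1)` in the exponents.
theorem contDiff_pow_div_pow {k : ℕ} (hf : ContDiff 𝕜 k f) (hg : ContDiff 𝕜 k g)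
    (hfg : ∀ a, g a = 0 → (fun x => f x ^ M) =O[𝓝 a] g) {s : ℕ} (hs : (M + 1) * k < s) (j : ℕ) :
    ContDiff 𝕜 k fun x => f x ^ (s + M * j) / g x ^ j := by
  induction k generalizing s j with
  | zero =>
    exact contDiff_zero.2 <|
      continuous_pow_div_pow hf.continuous hg.continuous hfg (Nat.ne_zero_of_lt hs) j
  | succ k ih =>
    obtain ⟨s, rfl⟩ := Nat.exists_eq_add_of_le' (show M + 1 ≤ s by lia)
    obtain ⟨f', hf', hff'⟩ := contDiff_succ_iff_hasFDerivAt.1 hf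
    obtain ⟨g', hg', hgg'⟩ := contDiff_succ_iff_hasFDerivAt.1 hg
    have hfk : ContDiff 𝕜 k f := hf.of_succ
    have hgk : ContDiff 𝕜 k g := hg.of_succ
    refine contDiff_succ_iff_hasFDerivAt.2 ⟨fun x =>
      (f x ^ (s + M * (j + 1)) / g x ^ (j + 1)) •
        ((((s + M * (j + 1) : ℕ) + 1) * g x) • f' x - (j * f x) • g' x),
      (ih hfk hgk (by lia) (j + 1)).smul (by fun_prop), fun a => ?_⟩
    by_cases ha : g a = 0
    · have hzero := hasFDerivAt_zero_pow_div_pow (hfg a ha) ha (hff' a).differentiableAt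
        (s := s + (M + 1)) (by lia) j
      simpa [ha] using hzero
    · convert! hasFDerivAt_pow_succ_div_pow (hff' a) (hgg' a) ha (s + M * (j + 1)) j using 4
      ring

end Flatness

theorem IsRegulous.exists_common_denominator {n k : ℕ} {f g : (Fin n → ℝ) → ℝ}
    (hf : IsRegulous n k f) (hg : IsRegulous n k g) :
    ∃ p₁ p₂ q : MvPolynomial (Fin n) ℝ, q ≠ 0 ∧ (∀ x, eval x q * f x = eval x p₁) ∧
      ∀ x, eval x q * g x = eval x p₂ := by
  obtain ⟨-, p₁, q₁, hq₁, h₁⟩ := hf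
  obtain ⟨-, p₂, q₂, hq₂, h₂⟩ := hg
  refine ⟨p₁ * q₂, p₂ * q₁, q₁ * q₂, mul_ne_zero hq₁ hq₂, fun x => ?_, fun x => ?_⟩
  · simp only [map_mul, ← h₁]
    ring
  · simp only [map_mul, ← h₂]
    ring

theorem eq_zero_of_eval_mul_eq_zero {σ : Type*} [Finite σ] {q : MvPolynomial σ ℝ} (hq : q ≠ 0)
    {g : (σ → ℝ) → ℝ} (hg : Continuous g) (h : ∀ x, eval x q * g x = 0) : g = 0 :=
  hg.ext_on (dense_eval_ne_zero hq) continuous_zero fun x hx =>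
    (mul_eq_zero.1 (h x)).resolve_left hx

theorem IsRegulous.exists_pow_eq_mul {n k : ℕ} {f g : (Fin n → ℝ) → ℝ} (hf : IsRegulous n k f)
    (hg : IsRegulous n k g) (hfg : ∀ x, g x = 0 → f x = 0) :
    ∃ N h, IsRegulous n k h ∧ f ^ N = g * h := by
  obtain ⟨p₁, p₂, q, hq, hp₁, hp₂⟩ := hf.exists_common_denominator hg
  have hgc : Continuous g := hg.1.continuous
  rcases eq_or_ne p₂ 0 with rfl | hp₂0
  · have hg0 : g = 0 := eq_zero_of_eval_mul_eq_zero hq hgc (by simpa using hp₂)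
    exact ⟨1, 0, (regulousRing n k).zero_mem, funext fun x => by simp [hfg x, hg0]⟩
  obtain ⟨M, hM⟩ := exists_pow_isBigO_of_zeros_subset hf.1.continuous hgc hp₁ hp₂ hq hp₂0 hfg
  let N := (M + 1) * k + 1 + M * 1
  have hmul (x : Fin n → ℝ) : f x ^ N = g x * (f x ^ N / g x ^ 1) := by
    rw [pow_one, mul_div_cancel_of_imp' fun hx => by rw [hfg x hx, zero_pow (by lia)]]
  refine ⟨N, fun x => f x ^ N / g x ^ 1, ⟨contDiff_pow_div_pow hf.1 hg.1 hM (lt_add_one _) 1,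
    q * p₁ ^ N, p₂ * q ^ N, mul_ne_zero hp₂0 (pow_ne_zero N hq), fun x => ?_⟩, funext hmul⟩
  calc eval x (p₂ * q ^ N) * (f x ^ N / g x ^ 1)
      = eval x q * eval x q ^ N * (g x * (f x ^ N / g x ^ 1)) := by
        rw [map_mul, map_pow, ← hp₂]
        ring
    _ = eval x (q * p₁ ^ N) := by rw [← hmul, map_mul, map_pow, ← hp₁, mul_pow, mul_assoc]

/-- **Regulous functions, Proposition `prfinradg`**: for `k`-regulous functions `f`, `g`
on `ℝⁿ`, `f` lies in the radical of the principal ideal `(g)` of `R^k(ℝⁿ)` if and only if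
`Z(g) ⊆ Z(f)`. -/
theorem mem_radical_span_iff_zero_set_subset (n k : ℕ) (f g : regulousRing n k) :
    f ∈ (Ideal.span {g} : Ideal (regulousRing n k)).radical ↔
      {x : Fin n → ℝ | (g : (Fin n → ℝ) → ℝ) x = 0} ⊆
        {x : Fin n → ℝ | (f : (Fin n → ℝ) → ℝ) x = 0} := by
  rw [Ideal.mem_radical_iff]
  constructor
  · rintro ⟨N, hN⟩ x hgx
    obtain ⟨h, hfN⟩ := Ideal.mem_span_singleton.1 hN
    have hfx := congrFun (congrArg Subtype.val hfN) x
    refine eq_zero_of_pow_eq_zero (n := N) ?_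
    simpa [show g.1 x = 0 from hgx] using hfx
  · intro hZ
    obtain ⟨N, h, hh, hfN⟩ := f.2.exists_pow_eq_mul g.2 fun x hx => hZ hx
    exact ⟨N, Ideal.mem_span_singleton.2 ⟨⟨h, hh⟩, Subtype.ext hfN⟩⟩
end
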